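/- arXiv:1508.06199 — 4 statements merged into one kernel-verified Lean document; each statement's English description precedes it below -/
import Mathlib

section
/- Assume m₁+m₂ > 1. There exist a constant C > 0 and a natural number N such that for every λ ∈ ℂ with Im λ > 0 and every t ∈ (0, 1/2], |b_λ(t)| ≤ C (1+|λ|)^N t^{−(m₁+m₂−1)}. -/
open Complex MeasureTheory Set

noncomputable section

/-- Gauss hypergeometric function ₂F₁ as a power series sum. -/
def hyp (a b c x : ℂ) : ℂ :=
  ∑' n : ℕ, (ascPochhammer ℂ n).eval a * (ascPochhammer ℂ n).eval b /
    ((ascPochhammer ℂ n).eval c * (n.factorial : ℂ)) * x ^ n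

/-- ρ = (m₁ + 2 m₂)/2 -/
def rho (m₁ m₂ : ℕ) : ℝ := ((m₁ : ℝ) + 2 * m₂) / 2

/-- Δ(t) = (2 sinh t)^(m₁+m₂) (2 cosh t)^(m₂) -/
def Del (m₁ m₂ : ℕ) (t : ℝ) : ℝ :=
  (2 * Real.sinh t) ^ (m₁ + m₂) * (2 * Real.cosh t) ^ m₂

/-- The solution Φ_λ. -/
def Phi (m₁ m₂ : ℕ) (l : ℂ) (t : ℝ) : ℂ :=
  ((2 * Real.cosh t : ℝ) : ℂ) ^ (Complex.I * l - (rho m₁ m₂ : ℂ)) *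
    hyp (((rho m₁ m₂ : ℂ) - Complex.I * l) / 2) (((m₁ : ℂ) + 2) / 4 - Complex.I * l / 2)
      (1 - Complex.I * l) ((((Real.cosh t) ^ 2 : ℝ) : ℂ))⁻¹

/-- The function b_λ. -/
def bfun (m₁ m₂ : ℕ) (l : ℂ) (t : ℝ) : ℂ :=
  (2 : ℂ) ^ (-(rho m₁ m₂ : ℂ) - 1 - Complex.I * l) *
    (Complex.Gamma (((rho m₁ m₂ : ℂ) - Complex.I * l) / 2) *
      Complex.Gamma (((m₁ : ℂ) + 2) / 4 - Complex.I * l / 2) /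
      (Complex.Gamma (((m₁ : ℂ) + (m₂ : ℂ) + 1) / 2) * Complex.Gamma (1 - Complex.I * l))) *
    Phi m₁ m₂ l t

theorem norm_ofReal_cpow_sub_one_mul {u : ℝ} (hu : u ∈ Ioo (0 : ℝ) 1) (a b : ℂ) :
    ‖(u : ℂ) ^ (a - 1) * (1 - (u : ℂ)) ^ (b - 1)‖ = u ^ (a.re - 1) * (1 - u) ^ (b.re - 1) := by
  have h1 : (1 - (u : ℂ)) = ((1 - u : ℝ) : ℂ) := by push_cast; rfl
  rw [norm_mul, h1, norm_cpow_eq_rpow_re_of_pos hu.1, norm_cpow_eq_rpow_re_of_pos (sub_pos.2 hu.2)]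
  simp

theorem ae_mem_Ioo_of_mem_Ioc {p : ℝ → Prop} (h : ∀ u ∈ Ioo (0 : ℝ) 1, p u) :
    ∀ᵐ u, u ∈ Ioc (0 : ℝ) 1 → p u := by
  filter_upwards [compl_mem_ae_iff.mpr (measure_singleton (1 : ℝ))] with u hu hu'
  exact h u ⟨hu'.1, lt_of_le_of_ne hu'.2 hu⟩

theorem intervalIntegrable_beta_weight {α β : ℝ} (hα : 0 < α) (hβ : 0 < β) :
    IntervalIntegrable (fun u : ℝ => u ^ (α - 1) * (1 - u) ^ (β - 1)) volume 0 1 := by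
  have h := (betaIntegral_convergent (u := (α : ℂ)) (v := (β : ℂ)) (by simpa) (by simpa)).norm
  rw [intervalIntegrable_iff, uIoc_of_le zero_le_one] at h ⊢
  refine h.congr ?_
  rw [Filter.EventuallyEq, ae_restrict_iff' measurableSet_Ioc]
  refine ae_mem_Ioo_of_mem_Ioc fun u hu => ?_
  rw [norm_ofReal_cpow_sub_one_mul hu]
  simp

theorem norm_Gamma_le_of_add_pos {α δ : ℝ} (hα : 0 < α) (hδ : 0 < δ) :
    ∃ K : ℝ, 0 ≤ K ∧ ∀ z : ℂ, 0 ≤ z.re →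
      ‖Complex.Gamma (α + z)‖ ≤ K * ‖Complex.Gamma ((α + δ : ℝ) + z)‖ := by
  have hint := intervalIntegrable_beta_weight hα hδ
  have hΓ : 0 < ‖Complex.Gamma δ‖ := norm_pos_iff.2 (Gamma_ne_zero_of_re_pos (by simpa))
  set J := ∫ u in (0 : ℝ)..1, u ^ (α - 1) * (1 - u) ^ (δ - 1)
  have key : ∀ z : ℂ, 0 ≤ z.re → ‖betaIntegral (α + z) δ‖ ≤ J := by
    intro z hz
    refine intervalIntegral.norm_integral_le_of_norm_le zero_le_one
      (ae_mem_Ioo_of_mem_Ioc fun u hu => ?_) hint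
    rw [norm_ofReal_cpow_sub_one_mul hu]
    have := sub_pos.2 hu.2
    simp only [add_re, ofReal_re]
    gcongr ?_ * _
    exact Real.rpow_le_rpow_of_exponent_ge hu.1 hu.2.le (by linarith)
  have hJ : 0 ≤ J := (norm_nonneg _).trans (key 0 le_rfl)
  refine ⟨J / ‖Complex.Gamma δ‖, by positivity, fun z hz => ?_⟩
  have h := Gamma_mul_Gamma_eq_betaIntegral (s := α + z) (t := δ) (by simp; linarith) (by simpa)
  rw [div_mul_eq_mul_div, le_div_iff₀ hΓ, ← norm_mul, h, norm_mul, mul_comm]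
  gcongr
  · exact key z hz
  · apply le_of_eq
    congr 2
    push_cast
    ring

theorem norm_Gamma_add_nat_le {β : ℝ} (hβ : 0 < β) (k : ℕ) :
    ∃ K : ℝ, 0 ≤ K ∧ ∀ z : ℂ, 0 ≤ z.re →
      ‖Complex.Gamma ((β + k : ℝ) + z)‖ ≤ K * (1 + ‖z‖) ^ k * ‖Complex.Gamma (β + z)‖ := by
  induction k with
  | zero => exact ⟨1, zero_le_one, fun z _ => by simp⟩
  | succ k ih =>
    obtain ⟨K, hK, h⟩ := ih
    refine ⟨(1 + β + k) * K, by positivity, fun z hz => ?_⟩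
    have hne : ((β + k : ℝ) : ℂ) + z ≠ 0 := by
      intro h0
      have := congrArg Complex.re h0
      simp only [add_re, ofReal_re, zero_re] at this
      have : 0 < β + k := by positivity
      linarith
    have e : ((β + (k + 1 : ℕ) : ℝ) : ℂ) + z = ((β + k : ℝ) + z) + 1 := by push_cast; ring
    have hn : ‖((β + k : ℝ) : ℂ) + z‖ ≤ (1 + β + k) * (1 + ‖z‖) := by
      have h0 : 0 ≤ β + k := by positivity
      refine (norm_add_le _ _).trans ?_
      rw [Complex.norm_of_nonneg h0]
      nlinarith [norm_nonneg z]
    rw [e, Complex.Gamma_add_one _ hne, norm_mul]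
    calc _ ≤ ((1 + β + k) * (1 + ‖z‖)) * (K * (1 + ‖z‖) ^ k * ‖Complex.Gamma (β + z)‖) := by
            gcongr
            exact h z hz
      _ = _ := by ring

theorem norm_Gamma_le_norm_Gamma {α β : ℝ} (hα : 0 < α) (hβ : 0 < β) :
    ∃ (K : ℝ) (N : ℕ), 0 ≤ K ∧ ∀ z : ℂ, 0 ≤ z.re →
      ‖Complex.Gamma (α + z)‖ ≤ K * (1 + ‖z‖) ^ N * ‖Complex.Gamma (β + z)‖ := by
  obtain ⟨N, hN⟩ := exists_nat_gt (α - β)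
  obtain ⟨K₁, hK₁, h₁⟩ := norm_Gamma_le_of_add_pos hα (δ := β + N - α) (by linarith)
  obtain ⟨K₂, hK₂, h₂⟩ := norm_Gamma_add_nat_le hβ N
  refine ⟨K₁ * K₂, N, by positivity, fun z hz => (h₁ z hz).trans ?_⟩
  rw [add_sub_cancel]
  calc _ ≤ K₁ * (K₂ * (1 + ‖z‖) ^ N * ‖Complex.Gamma (β + z)‖) := by gcongr; exact h₂ z hz
    _ = _ := by ring

theorem Gamma_add_nat_eq {a : ℂ} (ha : 0 < a.re) (n : ℕ) :
    Complex.Gamma (a + n) = (ascPochhammer ℂ n).eval a * Complex.Gamma a := by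
  induction n with
  | zero => simp
  | succ n ih =>
    have : a + n ≠ 0 := by
      intro h0
      have h1 := congrArg Complex.re h0
      simp only [add_re, natCast_re, zero_re] at h1
      have := Nat.cast_nonneg (α := ℝ) n
      linarith
    rw [Nat.cast_succ, ← add_assoc, Complex.Gamma_add_one _ this, ih, ascPochhammer_succ_eval]
    ring

theorem choose_add_sub_one_eq (a : ℂ) (n : ℕ) :
    Ring.choose (a + n - 1) n = (ascPochhammer ℂ n).eval a / (n.factorial : ℂ) := by
  rw [eq_div_iff (by exact_mod_cast n.factorial_ne_zero), Ring.choose]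
  have h := Ring.factorial_nsmul_multichoose_eq_ascPochhammer a n
  rw [Polynomial.ascPochhammer_smeval_eq_eval, nsmul_eq_mul] at h
  rw [← h, mul_comm]
  congr 2
  ring

theorem hasSum_Gamma_binomial {a : ℂ} (ha : 0 < a.re) {y : ℝ} (hy : y ∈ Ico (0 : ℝ) 1) :
    HasSum (fun n : ℕ => Complex.Gamma (a + n) / (n.factorial : ℂ) * (y : ℂ) ^ n)
      (Complex.Gamma a * (1 - (y : ℂ)) ^ (-a)) := by
  have hy' : (y : ℂ) ∈ Metric.eball (0 : ℂ) 1 := by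
    simp [← ofReal_norm, abs_of_nonneg hy.1, hy.2]
  have h := ((one_div_one_sub_cpow_hasFPowerSeriesOnBall_zero a).hasSum hy').mul_left
    (Complex.Gamma a)
  simp only [FormalMultilinearSeries.ofScalars_apply_eq, choose_add_sub_one_eq, smul_eq_mul,
    zero_add] at h
  rw [cpow_neg, ← one_div]
  have e (n : ℕ) : Complex.Gamma (a + n) / (n.factorial : ℂ) * (y : ℂ) ^ n =
      Complex.Gamma a * ((ascPochhammer ℂ n).eval a / (n.factorial : ℂ) * (y : ℂ) ^ n) := by
    rw [Gamma_add_nat_eq ha]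
    ring
  rw [funext e]
  exact h

theorem intervalIntegrable_rpow_mul_max_rpow {p κ : ℝ} (hp : 0 < p) (hκ : 0 < κ) {ε : ℝ}
    (hε : ε ∈ Ioo (0 : ℝ) 1) :
    IntervalIntegrable (fun v : ℝ => v ^ (p - 1) * max ε v ^ (-(κ + p))) volume 0 1 ∧
      ∫ v in (0 : ℝ)..1, v ^ (p - 1) * max ε v ^ (-(κ + p)) ≤ (1 / p + 1 / κ) * ε ^ (-κ) := by
  have hε0 := hε.1
  have i₁ : IntervalIntegrable (fun v : ℝ => v ^ (p - 1) * ε ^ (-(κ + p))) volume 0 ε :=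
    (intervalIntegral.intervalIntegrable_rpow' (by linarith)).mul_const _
  have i₂ : IntervalIntegrable (fun v : ℝ => v ^ (-κ - 1)) volume ε 1 :=
    intervalIntegral.intervalIntegrable_rpow (Or.inr (by
      rw [uIcc_of_le hε.2.le]; exact fun h => absurd h.1 (not_le.2 hε0)))
  have e₁ : EqOn (fun v : ℝ => v ^ (p - 1) * ε ^ (-(κ + p)))
      (fun v : ℝ => v ^ (p - 1) * max ε v ^ (-(κ + p))) (uIcc 0 ε) := by
    intro v hv
    rw [uIcc_of_le hε0.le] at hv
    simp only [max_eq_left hv.2]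
  have e₂ : EqOn (fun v : ℝ => v ^ (-κ - 1))
      (fun v : ℝ => v ^ (p - 1) * max ε v ^ (-(κ + p))) (uIcc ε 1) := by
    intro v hv
    rw [uIcc_of_le hε.2.le] at hv
    simp only [max_eq_right hv.1]
    rw [← Real.rpow_add (hε0.trans_le hv.1)]
    congr 1
    ring
  have j₁ := i₁.congr (e₁.mono uIoc_subset_uIcc)
  have j₂ := i₂.congr (e₂.mono uIoc_subset_uIcc)
  refine ⟨j₁.trans j₂, ?_⟩
  rw [← intervalIntegral.integral_add_adjacent_intervals j₁ j₂,
    ← intervalIntegral.integral_congr e₁, ← intervalIntegral.integral_congr e₂,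
    intervalIntegral.integral_mul_const, integral_rpow (Or.inl (by linarith)),
    integral_rpow (Or.inr ⟨by linarith, by
      rw [uIcc_of_le hε.2.le]; exact fun h => absurd h.1 (not_le.2 hε0)⟩)]
  have h1 : ε ^ (p - 1 + 1) * ε ^ (-(κ + p)) = ε ^ (-κ) := by
    rw [← Real.rpow_add hε0]
    congr 1
    ring
  have h2 : -κ - 1 + 1 = -κ := by ring
  have h3 : p - 1 + 1 = p := by ring
  rw [h3] at h1 ⊢
  rw [h2, Real.zero_rpow hp.ne', Real.one_rpow, sub_zero, div_mul_eq_mul_div, h1]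
  have : (1 - ε ^ (-κ)) / -κ = ε ^ (-κ) * (1 / κ) - 1 / κ := by field_simp; ring
  rw [this]
  have : 0 < 1 / κ := by positivity
  have : ε ^ (-κ) / p = ε ^ (-κ) * (1 / p) := by ring
  linarith

theorem euler_integral_bound {β p κ : ℝ} (hβ : 0 < β) (hp : 0 < p) (hκ : 0 < κ) :
    ∃ K : ℝ, 0 ≤ K ∧ ∀ x ∈ Ioo (0 : ℝ) 1, ∃ g : ℝ → ℝ, IntervalIntegrable g volume 0 1 ∧
      (∀ u ∈ Ioo (0 : ℝ) 1,
        u ^ (β - 1) * (1 - u) ^ (p - 1) * (1 - x * u) ^ (-(κ + p)) ≤ g u) ∧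
      ∫ u in (0 : ℝ)..1, g u ≤ K * (1 - x) ^ (-κ) := by
  have hint := intervalIntegrable_beta_weight hβ hp
  set J := ∫ u in (0 : ℝ)..1, u ^ (β - 1) * (1 - u) ^ (p - 1) with hJ
  have hJ0 : 0 ≤ J := intervalIntegral.integral_nonneg zero_le_one fun u hu =>
    mul_nonneg (Real.rpow_nonneg hu.1 _) (Real.rpow_nonneg (sub_nonneg.2 hu.2) _)
  refine ⟨2 ^ (κ + p) * J + 2 * (1 / p + 1 / κ), by positivity, fun x hx => ?_⟩
  have hε : 1 - x ∈ Ioo (0 : ℝ) 1 := ⟨by linarith [hx.2], by linarith [hx.1]⟩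
  have hε0 := hε.1
  obtain ⟨hi, hle⟩ := intervalIntegrable_rpow_mul_max_rpow hp hκ hε
  have hi' : IntervalIntegrable
      (fun u : ℝ => (1 - u) ^ (p - 1) * max (1 - x) (1 - u) ^ (-(κ + p))) volume 0 1 := by
    simpa using (hi.comp_sub_left 1).symm
  have hii : ∫ u in (0 : ℝ)..1, (1 - u) ^ (p - 1) * max (1 - x) (1 - u) ^ (-(κ + p)) =
      ∫ v in (0 : ℝ)..1, v ^ (p - 1) * max (1 - x) v ^ (-(κ + p)) := by
    simpa using intervalIntegral.integral_comp_sub_left (a := 0) (b := 1)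
      (fun v : ℝ => v ^ (p - 1) * max (1 - x) v ^ (-(κ + p))) 1
  refine ⟨fun u => 2 ^ (κ + p) * (1 - x) ^ (-κ) * (u ^ (β - 1) * (1 - u) ^ (p - 1)) +
    2 * ((1 - u) ^ (p - 1) * max (1 - x) (1 - u) ^ (-(κ + p))),
    (hint.const_mul _).add (hi'.const_mul _), fun u hu => ?_, ?_⟩
  · have hu0 := hu.1
    have hv0 : 0 < 1 - u := sub_pos.2 hu.2
    have hmax : max (1 - x) (1 - u) ≤ 1 - x * u :=
      max_le (by nlinarith [hx.1, hu.2]) (by nlinarith [hx.2, hu.1])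
    have hmax0 : 0 < max (1 - x) (1 - u) := lt_max_of_lt_left hε0
    rcases le_total u (1 / 2) with h | h
    · refine le_add_of_le_of_nonneg ?_ (by positivity)
      have h1 : (1 - x * u) ^ (-(κ + p)) ≤ 2 ^ (κ + p) := by
        have : (2 : ℝ) ^ (κ + p) = (1 / 2) ^ (-(κ + p)) := by
          rw [Real.rpow_neg (by norm_num), one_div, Real.inv_rpow (by norm_num), inv_inv]
        rw [this]
        exact Real.rpow_le_rpow_of_nonpos (by norm_num) (by nlinarith [hx.2, hx.1])
          (by linarith)
      have h2 : 1 ≤ (1 - x) ^ (-κ) :=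
        Real.one_le_rpow_of_pos_of_le_one_of_nonpos hε0 hε.2.le (by linarith)
      rw [mul_comm]
      gcongr ?_ * _
      exact h1.trans (le_mul_of_one_le_right (by positivity) h2)
    · refine le_add_of_nonneg_of_le (by positivity) ?_
      have h1 : u ^ (β - 1) ≤ 2 := by
        rw [Real.rpow_sub_one hu0.ne', div_le_iff₀ hu0]
        linarith [Real.rpow_le_one hu0.le hu.2.le hβ.le]
      have h2 : (1 - x * u) ^ (-(κ + p)) ≤ max (1 - x) (1 - u) ^ (-(κ + p)) :=
        Real.rpow_le_rpow_of_nonpos hmax0 hmax (by linarith)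
      have h3 : 0 < 1 - x * u := hmax0.trans_le hmax
      rw [mul_assoc]
      gcongr
  · rw [intervalIntegral.integral_add (hint.const_mul _) (hi'.const_mul _),
      intervalIntegral.integral_const_mul, intervalIntegral.integral_const_mul, hii, ← hJ]
    linarith

/-- The `n`-th term of the Gauss series with parameters `a, b; c`, normalized by Gamma factors. -/
def gaussTerm (a b c : ℂ) (x : ℝ) (n : ℕ) : ℂ :=
  Complex.Gamma (a + n) * Complex.Gamma (b + n) / (Complex.Gamma (c + n) * (n.factorial : ℂ)) *
    (x : ℂ) ^ n

theorem hasSum_gaussTerm_euler {a b q : ℂ} (ha : 0 < a.re) (hb : 0 < b.re) (hq : 0 < q.re)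
    {x : ℝ} (hx : x ∈ Ioo (0 : ℝ) 1) :
    HasSum (gaussTerm a b (b + q) x) (Complex.Gamma a / Complex.Gamma q *
      ∫ u in (0 : ℝ)..1, (u : ℂ) ^ (b - 1) * (1 - (u : ℂ)) ^ (q - 1) *
        (1 - ((x * u : ℝ) : ℂ)) ^ (-a)) := by
  set w : ℝ → ℂ := fun u => (u : ℂ) ^ (b - 1) * (1 - (u : ℂ)) ^ (q - 1) with hw
  have hwi : IntervalIntegrable w volume 0 1 := betaIntegral_convergent hb hq
  set k : ℕ → ℂ := fun n => Complex.Gamma (a + n) / (n.factorial : ℂ) with hk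
  have hΓq := Gamma_ne_zero_of_re_pos hq
  have hsum : Summable fun n => ‖k n * (x : ℂ) ^ n‖ :=
    (hasSum_Gamma_binomial ha ⟨hx.1.le, hx.2⟩).summable.norm
  have hI : uIoc (0 : ℝ) 1 = Ioc 0 1 := uIoc_of_le zero_le_one
  have hs : HasSum (fun n => ∫ u in (0 : ℝ)..1, w u * (k n * ((x * u : ℝ) : ℂ) ^ n))
      (∫ u in (0 : ℝ)..1, w u * (Complex.Gamma a * (1 - ((x * u : ℝ) : ℂ)) ^ (-a))) := by
    refine intervalIntegral.hasSum_integral_of_dominated_convergence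
      (fun n u => ‖w u‖ * ‖k n * (x : ℂ) ^ n‖) (fun n => ?_) (fun n => ?_) ?_ ?_ ?_
    · exact hwi.def'.aestronglyMeasurable.mul
        (Continuous.aestronglyMeasurable (by fun_prop))
    · refine Filter.Eventually.of_forall fun u hu => ?_
      rw [hI] at hu
      rw [norm_mul]
      refine mul_le_mul_of_nonneg_left ?_ (norm_nonneg _)
      rw [norm_mul, norm_mul, norm_pow, norm_pow]
      have h0 := mul_nonneg hx.1.le hu.1.le
      gcongr ‖k n‖ * ?_ ^ n
      rw [Complex.norm_of_nonneg h0, Complex.norm_of_nonneg hx.1.le]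
      exact mul_le_of_le_one_right hx.1.le hu.2
    · exact Filter.Eventually.of_forall fun u _ => hsum.mul_left _
    · simp only [tsum_mul_left]
      exact hwi.norm.mul_const _
    · refine Filter.Eventually.of_forall fun u hu => ?_
      rw [hI] at hu
      exact (hasSum_Gamma_binomial ha ⟨mul_nonneg hx.1.le hu.1.le,
        (mul_le_of_le_one_right hx.1.le hu.2).trans_lt hx.2⟩).mul_left _
  have hs' := hs.mul_left (Complex.Gamma q)⁻¹
  have e₁ : (Complex.Gamma q)⁻¹ *
      ∫ u in (0 : ℝ)..1, w u * (Complex.Gamma a * (1 - ((x * u : ℝ) : ℂ)) ^ (-a)) =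
      Complex.Gamma a / Complex.Gamma q *
        ∫ u in (0 : ℝ)..1, w u * (1 - ((x * u : ℝ) : ℂ)) ^ (-a) := by
    simp_rw [mul_left_comm (w _) (Complex.Gamma a)]
    rw [intervalIntegral.integral_const_mul]
    ring
  have e₂ (n : ℕ) : gaussTerm a b (b + q) x n = (Complex.Gamma q)⁻¹ *
      ∫ u in (0 : ℝ)..1, w u * (k n * ((x * u : ℝ) : ℂ) ^ n) := by
    have hbn : 0 < (b + n).re := by
      rw [add_re, natCast_re]
      positivity
    have hβ := Gamma_mul_Gamma_eq_betaIntegral hbn hq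
    have hne : Complex.Gamma (b + n + q) ≠ 0 :=
      Gamma_ne_zero_of_re_pos (by rw [add_re]; positivity)
    have h : ∫ u in (0 : ℝ)..1, w u * (k n * ((x * u : ℝ) : ℂ) ^ n) =
        k n * (x : ℂ) ^ n * betaIntegral (b + n) q := by
      rw [betaIntegral, ← intervalIntegral.integral_const_mul]
      refine intervalIntegral.integral_congr_ae ?_
      rw [hI]
      refine ae_mem_Ioo_of_mem_Ioc fun u hu => ?_
      have : (u : ℂ) ^ (b + n - 1) = (u : ℂ) ^ (b - 1) * (u : ℂ) ^ n := by
        rw [← cpow_natCast, ← cpow_add _ _ (by exact_mod_cast hu.1.ne')]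
        congr 1
        ring
      simp only [hw, this]
      push_cast
      ring
    rw [h, gaussTerm, add_right_comm b q, eq_inv_mul_iff_mul_eq₀ hΓq]
    have hf : (n.factorial : ℂ) ≠ 0 := by exact_mod_cast n.factorial_ne_zero
    simp only [hk]
    field_simp
    linear_combination Complex.Gamma (a + n) * (x : ℂ) ^ n * hβ
  rw [funext e₂, ← e₁]
  exact hs'

theorem exists_hasSum_gaussTerm_of_lt {α β γ κ : ℝ} (hα : 0 < α) (hβ : 0 < β) (hβγ : β < γ)
    (hκ : 0 < κ) (h : α + β ≤ γ + κ) :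
    ∃ (K : ℝ) (N : ℕ), 0 ≤ K ∧ ∀ z : ℂ, 0 ≤ z.re → ∀ x ∈ Ioo (0 : ℝ) 1,
      ∃ S, HasSum (gaussTerm (α + z) (β + z) (γ + 2 * z) x) S ∧
        ‖S‖ ≤ K * (1 + ‖z‖) ^ N * (1 - x) ^ (-κ) := by
  have hp : 0 < γ - β := sub_pos.2 hβγ
  obtain ⟨K₁, N, hK₁, h₁⟩ := norm_Gamma_le_norm_Gamma hα hp
  obtain ⟨K₂, hK₂, h₂⟩ := euler_integral_bound hβ hp hκ
  refine ⟨K₁ * K₂, N, by positivity, fun z hz x hx => ?_⟩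
  have hx0 := hx.1
  have h1x : 0 < 1 - x := sub_pos.2 hx.2
  obtain ⟨g, hgi, hg, hgle⟩ := h₂ x hx
  have hq : 0 < (((γ - β : ℝ) : ℂ) + z).re := by
    rw [add_re, ofReal_re]; positivity
  have hs := hasSum_gaussTerm_euler (a := α + z) (b := β + z) (q := ((γ - β : ℝ) : ℂ) + z)
    (by rw [add_re, ofReal_re]; positivity) (by rw [add_re, ofReal_re]; positivity) hq hx
  have e : (β : ℂ) + z + (((γ - β : ℝ) : ℂ) + z) = γ + 2 * z := by
    push_cast
    ring
  rw [e] at hs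
  refine ⟨_, hs, ?_⟩
  have hΓ : ‖Complex.Gamma (α + z) / Complex.Gamma (((γ - β : ℝ) : ℂ) + z)‖ ≤
      K₁ * (1 + ‖z‖) ^ N := by
    rw [norm_div, div_le_iff₀ (norm_pos_iff.2 (Gamma_ne_zero_of_re_pos hq))]
    exact h₁ z hz
  rw [norm_mul]
  calc _ ≤ (K₁ * (1 + ‖z‖) ^ N) * (K₂ * (1 - x) ^ (-κ)) := by
        gcongr
        refine (intervalIntegral.norm_integral_le_of_norm_le zero_le_one
          (ae_mem_Ioo_of_mem_Ioc fun u hu => ?_) hgi).trans hgle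
        refine le_trans ?_ (hg u hu)
        have hu0 := hu.1
        have hv0 : 0 < 1 - u := sub_pos.2 hu.2
        have hy : 1 - u ≤ 1 - x * u := by nlinarith [hx.2]
        have hy0 : 0 < 1 - x * u := hv0.trans_le hy
        have hy1 : 1 - x * u ≤ 1 := by nlinarith
        have hc : (1 - ((x * u : ℝ) : ℂ)) = ((1 - x * u : ℝ) : ℂ) := by push_cast; rfl
        rw [norm_mul, norm_ofReal_cpow_sub_one_mul hu, hc, norm_cpow_eq_rpow_re_of_pos hy0]
        simp only [add_re, ofReal_re, neg_re]
        have b₁ : u ^ (β + z.re - 1) ≤ u ^ (β - 1) :=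
          Real.rpow_le_rpow_of_exponent_ge hu0 hu.2.le (by linarith)
        have b₂ : (1 - u) ^ (γ - β + z.re - 1) ≤ (1 - u) ^ (γ - β - 1) * (1 - x * u) ^ z.re := by
          have : γ - β + z.re - 1 = (γ - β - 1) + z.re := by ring
          rw [this, Real.rpow_add hv0]
          gcongr
        have b₃ : (1 - x * u) ^ z.re * (1 - x * u) ^ (-(α + z.re)) ≤
            (1 - x * u) ^ (-(κ + (γ - β))) := by
          rw [← Real.rpow_add hy0]
          exact Real.rpow_le_rpow_of_exponent_ge hy0 hy1 (by linarith)
        calc _ ≤ u ^ (β - 1) * ((1 - u) ^ (γ - β - 1) * (1 - x * u) ^ z.re) *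
              (1 - x * u) ^ (-(α + z.re)) := by gcongr
          _ = u ^ (β - 1) * (1 - u) ^ (γ - β - 1) *
              ((1 - x * u) ^ z.re * (1 - x * u) ^ (-(α + z.re))) := by ring
          _ ≤ _ := by gcongr
    _ = _ := by ring

theorem gaussTerm_zero_eq {a b c : ℂ} (hc : 0 < c.re) (x : ℝ) :
    gaussTerm a b c x 0 = c * gaussTerm a b (c + 1) x 0 := by
  have hc0 : c ≠ 0 := fun h => by simp [h] at hc
  have := Gamma_ne_zero_of_re_pos hc
  simp only [gaussTerm, Nat.cast_zero, add_zero, Complex.Gamma_add_one c hc0]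
  field_simp

theorem gaussTerm_succ_eq {a b c : ℂ} (hc : 0 < c.re) (x : ℝ) (n : ℕ) :
    gaussTerm a b c x (n + 1) = c * gaussTerm a b (c + 1) x (n + 1) +
      x * gaussTerm (a + 1) (b + 1) (c + 2) x n := by
  have hre : 0 < (c + (n + 1 : ℕ)).re := by
    rw [add_re, natCast_re]
    positivity
  have hc0 : c + (n + 1 : ℕ) ≠ 0 := fun h => by rw [h] at hre; simp at hre
  have hΓ := Gamma_ne_zero_of_re_pos hre
  have e (y : ℂ) : y + 1 + n = y + (n + 1 : ℕ) := by push_cast; ring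
  have e₁ : c + 1 + (n + 1 : ℕ) = c + (n + 1 : ℕ) + 1 := by ring
  have e₂ : c + 2 + n = c + (n + 1 : ℕ) + 1 := by push_cast; ring
  have hf : (n.factorial : ℂ) ≠ 0 := by exact_mod_cast n.factorial_ne_zero
  have hn : ((n + 1 : ℕ) : ℂ) ≠ 0 := by exact_mod_cast n.succ_ne_zero
  simp only [gaussTerm, e, e₁, e₂, Complex.Gamma_add_one _ hc0, Nat.factorial_succ, Nat.cast_mul]
  field_simp
  ring

theorem hasSum_gaussTerm_contiguous {a b c : ℂ} (hc : 0 < c.re) {x : ℝ} {S₁ S₂ : ℂ}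
    (h₁ : HasSum (gaussTerm a b (c + 1) x) S₁)
    (h₂ : HasSum (gaussTerm (a + 1) (b + 1) (c + 2) x) S₂) :
    HasSum (gaussTerm a b c x) (c * S₁ + x * S₂) := by
  rw [← hasSum_nat_add_iff' 1]
  have h := (((hasSum_nat_add_iff' 1).2 h₁).mul_left c).add (h₂.mul_left (x : ℂ))
  simp only [Finset.range_one, Finset.sum_singleton] at h ⊢
  rw [gaussTerm_zero_eq hc, funext (gaussTerm_succ_eq hc x)]
  convert! h using 1
  ring

theorem exists_hasSum_gaussTerm {κ : ℝ} (hκ : 0 < κ) (r : ℕ) :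
    ∀ {α β γ : ℝ}, 0 < α → 0 < β → 0 < γ → β < γ + r → α + β ≤ γ + κ →
    ∃ (K : ℝ) (N : ℕ), 0 ≤ K ∧ ∀ z : ℂ, 0 ≤ z.re → ∀ x ∈ Ioo (0 : ℝ) 1,
      ∃ S, HasSum (gaussTerm (α + z) (β + z) (γ + 2 * z) x) S ∧
        ‖S‖ ≤ K * (1 + ‖z‖) ^ N * (1 - x) ^ (-κ) := by
  induction r with
  | zero =>
    intro α β γ hα hβ _ hr h
    exact exists_hasSum_gaussTerm_of_lt hα hβ (by simpa using hr) hκ h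
  | succ r ih =>
    intro α β γ hα hβ hγ hr h
    push_cast at hr
    obtain ⟨K₁, N₁, hK₁, H₁⟩ := ih (α := α) (β := β) (γ := γ + 1) hα hβ (by linarith)
      (by linarith) (by linarith)
    obtain ⟨K₂, N₂, hK₂, H₂⟩ := ih (α := α + 1) (β := β + 1) (γ := γ + 2) (by linarith)
      (by linarith) (by linarith) (by linarith) (by linarith)
    refine ⟨(γ + 2) * K₁ + K₂, N₁ + N₂ + 1, by positivity, fun z hz x hx => ?_⟩
    obtain ⟨S₁, hS₁, hn₁⟩ := H₁ z hz x hx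
    obtain ⟨S₂, hS₂, hn₂⟩ := H₂ z hz x hx
    have e₁ : ((γ + 1 : ℝ) : ℂ) + 2 * z = γ + 2 * z + 1 := by push_cast; ring
    have e₂ : ((γ + 2 : ℝ) : ℂ) + 2 * z = γ + 2 * z + 2 := by push_cast; ring
    have e (y : ℝ) : ((y + 1 : ℝ) : ℂ) + z = y + z + 1 := by push_cast; ring
    rw [e₁] at hS₁
    rw [e₂, e, e] at hS₂
    refine ⟨_, hasSum_gaussTerm_contiguous (by simp; linarith) hS₁ hS₂, ?_⟩
    have hx0 := hx.1
    have h1x : 0 < 1 - x := sub_pos.2 hx.2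
    have hz1 : 1 ≤ 1 + ‖z‖ := by linarith [norm_nonneg z]
    have hc : ‖(γ : ℂ) + 2 * z‖ ≤ (γ + 2) * (1 + ‖z‖) := by
      refine (norm_add_le _ _).trans ?_
      rw [Complex.norm_of_nonneg hγ.le, norm_mul, Complex.norm_two]
      nlinarith [norm_nonneg z]
    have p₁ : (1 + ‖z‖) ^ (N₁ + 1) ≤ (1 + ‖z‖) ^ (N₁ + N₂ + 1) :=
      pow_le_pow_right₀ hz1 (by lia)
    have p₂ : (1 + ‖z‖) ^ N₂ ≤ (1 + ‖z‖) ^ (N₁ + N₂ + 1) :=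
      pow_le_pow_right₀ hz1 (by lia)
    calc ‖((γ : ℂ) + 2 * z) * S₁ + x * S₂‖
        ≤ ‖(γ : ℂ) + 2 * z‖ * ‖S₁‖ + 1 * ‖S₂‖ := by
          refine (norm_add_le _ _).trans ?_
          rw [norm_mul, norm_mul, Complex.norm_of_nonneg hx0.le]
          gcongr
          exact hx.2.le
      _ ≤ ((γ + 2) * (1 + ‖z‖)) * (K₁ * (1 + ‖z‖) ^ N₁ * (1 - x) ^ (-κ)) +
          1 * (K₂ * (1 + ‖z‖) ^ N₂ * (1 - x) ^ (-κ)) := by gcongr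
      _ = (γ + 2) * K₁ * (1 + ‖z‖) ^ (N₁ + 1) * (1 - x) ^ (-κ) +
          K₂ * (1 + ‖z‖) ^ N₂ * (1 - x) ^ (-κ) := by ring
      _ ≤ (γ + 2) * K₁ * (1 + ‖z‖) ^ (N₁ + N₂ + 1) * (1 - x) ^ (-κ) +
          K₂ * (1 + ‖z‖) ^ (N₁ + N₂ + 1) * (1 - x) ^ (-κ) := by gcongr
      _ = _ := by ring

theorem Gamma_mul_hyp {a b c : ℂ} (ha : 0 < a.re) (hb : 0 < b.re) (hc : 0 < c.re) (x : ℝ) :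
    Complex.Gamma a * Complex.Gamma b / Complex.Gamma c * hyp a b c x =
      ∑' n, gaussTerm a b c x n := by
  rw [hyp, ← tsum_mul_left]
  congr 1
  ext n
  have := Gamma_ne_zero_of_re_pos hc
  rw [gaussTerm, Gamma_add_nat_eq ha, Gamma_add_nat_eq hb, Gamma_add_nat_eq hc]
  simp only [div_eq_mul_inv, mul_inv]
  ring

theorem one_sub_inv_cosh_sq_rpow_le {κ : ℝ} (hκ : 0 < κ) {t : ℝ} (ht : t ∈ Ioc (0 : ℝ) (1 / 2)) :
    (1 - (Real.cosh t ^ 2)⁻¹) ^ (-κ) ≤ 2 ^ (2 * κ) * t ^ (-(2 * κ)) := by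
  have ht0 := ht.1
  have hc0 := Real.cosh_pos t
  have hs : t ≤ Real.sinh t := Real.self_le_sinh_iff.2 ht0.le
  have hc : Real.cosh t ≤ 2 := by
    rw [Real.cosh_eq]
    have h1 : Real.exp t ≤ 3 :=
      (Real.exp_le_exp.2 (by linarith [ht.2])).trans Real.exp_one_lt_three.le
    have h2 : Real.exp (-t) ≤ 1 := Real.exp_le_one_iff.2 (by linarith)
    linarith
  have hsq : (t / 2) ^ 2 ≤ 1 - (Real.cosh t ^ 2)⁻¹ := by
    have e : 1 - (Real.cosh t ^ 2)⁻¹ = (Real.sinh t / Real.cosh t) ^ 2 := by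
      rw [div_pow, Real.sinh_sq]
      field_simp
    rw [e]
    gcongr
  refine (Real.rpow_le_rpow_of_nonpos (by positivity) hsq (by linarith)).trans (le_of_eq ?_)
  rw [← Real.rpow_natCast, ← Real.rpow_mul (by positivity), Real.div_rpow ht0.le (by norm_num)]
  have e : ((2 : ℕ) : ℝ) * -κ = -(2 * κ) := by push_cast; ring
  rw [e, Real.rpow_neg (by norm_num : (0 : ℝ) ≤ 2), div_inv_eq_mul, mul_comm]

theorem stmt0 (m₁ m₂ : ℕ) (hm₁ : 1 ≤ m₁) (hm : 1 < m₁ + m₂) :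
    ∃ (C : ℝ) (N : ℕ), 0 < C ∧
      ∀ l : ℂ, 0 < l.im → ∀ t ∈ Set.Ioc (0 : ℝ) (1 / 2),
        ‖bfun m₁ m₂ l t‖ ≤ C * (1 + ‖l‖) ^ N * t ^ (-(((m₁ : ℝ) + m₂) - 1)) := by
  set κ : ℝ := ((m₁ : ℝ) + m₂ - 1) / 2 with hκdef
  have hm₁' : (1 : ℝ) ≤ m₁ := by exact_mod_cast hm₁
  have hm' : (1 : ℝ) < m₁ + m₂ := by exact_mod_cast hm
  have hm₂' : (0 : ℝ) ≤ m₂ := Nat.cast_nonneg m₂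
  have hκ : 0 < κ := by rw [hκdef]; linarith
  have hρ : 0 < rho m₁ m₂ := by rw [rho]; linarith
  obtain ⟨K, N, hK, H⟩ := exists_hasSum_gaussTerm hκ m₁ (α := rho m₁ m₂ / 2)
    (β := ((m₁ : ℝ) + 2) / 4) (γ := 1) (by positivity) (by positivity) one_pos (by linarith)
    (by rw [rho]; linarith)
  set G := Complex.Gamma (((m₁ : ℂ) + (m₂ : ℂ) + 1) / 2)
  refine ⟨‖G‖⁻¹ * K * 2 ^ (2 * κ) + 1, N, by positivity, fun l hl t ht => ?_⟩
  have ht0 := ht.1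
  set z : ℂ := -(Complex.I * l / 2) with hz
  have hzre : z.re = l.im / 2 := by simp [hz, neg_div]
  have hz0 : 0 ≤ z.re := by rw [hzre]; positivity
  have hzn : ‖z‖ ≤ ‖l‖ := by
    rw [hz, norm_neg, norm_div, norm_mul, Complex.norm_I, Complex.norm_two, one_mul]
    linarith [norm_nonneg l]
  have hch : 1 < Real.cosh t := Real.one_lt_cosh.2 ht0.ne'
  have hx : (Real.cosh t ^ 2)⁻¹ ∈ Ioo (0 : ℝ) 1 :=
    ⟨by positivity, inv_lt_one_of_one_lt₀ (one_lt_pow₀ hch two_ne_zero)⟩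
  obtain ⟨S, hS, hSn⟩ := H z hz0 _ hx
  have ha : ((rho m₁ m₂ : ℂ) - Complex.I * l) / 2 = ((rho m₁ m₂ / 2 : ℝ) : ℂ) + z := by
    rw [hz]; push_cast; ring
  have hb : ((m₁ : ℂ) + 2) / 4 - Complex.I * l / 2 = ((((m₁ : ℝ) + 2) / 4 : ℝ) : ℂ) + z := by
    rw [hz]; push_cast; ring
  have hc : 1 - Complex.I * l = ((1 : ℝ) : ℂ) + 2 * z := by rw [hz]; push_cast; ring
  have hhyp := Gamma_mul_hyp (a := ((rho m₁ m₂ / 2 : ℝ) : ℂ) + z)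
    (b := ((((m₁ : ℝ) + 2) / 4 : ℝ) : ℂ) + z) (c := ((1 : ℝ) : ℂ) + 2 * z)
    (by rw [add_re, ofReal_re]; positivity) (by rw [add_re, ofReal_re]; positivity)
    (by simp; linarith) (Real.cosh t ^ 2)⁻¹
  rw [hS.tsum_eq] at hhyp
  have hbfun : bfun m₁ m₂ l t = (2 : ℂ) ^ (-(rho m₁ m₂ : ℂ) - 1 - Complex.I * l) *
      ((2 * Real.cosh t : ℝ) : ℂ) ^ (Complex.I * l - (rho m₁ m₂ : ℂ)) * (G⁻¹ * S) := by
    rw [← hhyp, bfun, Phi, ha, hb, hc, ofReal_inv]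
    change _ * (_ / (G * _)) * _ = _
    simp only [div_eq_mul_inv, mul_inv]
    ring
  have hpow : ‖(2 : ℂ) ^ (-(rho m₁ m₂ : ℂ) - 1 - Complex.I * l)‖ *
      ‖((2 * Real.cosh t : ℝ) : ℂ) ^ (Complex.I * l - (rho m₁ m₂ : ℂ))‖ ≤ 1 := by
    have h := norm_cpow_eq_rpow_re_of_pos (x := 2) (by norm_num)
      (-(rho m₁ m₂ : ℂ) - 1 - Complex.I * l)
    rw [ofReal_ofNat] at h
    rw [h, norm_cpow_eq_rpow_re_of_pos (by positivity)]
    have r₁ : (-(rho m₁ m₂ : ℂ) - 1 - Complex.I * l).re = -rho m₁ m₂ - 1 + l.im := by simp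
    have r₂ : (Complex.I * l - (rho m₁ m₂ : ℂ)).re = -l.im - rho m₁ m₂ := by simp
    rw [r₁, r₂]
    calc _ ≤ (2 : ℝ) ^ (-rho m₁ m₂ - 1 + l.im) * 2 ^ (-l.im - rho m₁ m₂) := by
          have : 2 ≤ 2 * Real.cosh t := by linarith
          exact mul_le_mul_of_nonneg_left
            (Real.rpow_le_rpow_of_nonpos two_pos this (by linarith)) (by positivity)
      _ ≤ 1 := by
          rw [← Real.rpow_add two_pos]
          exact Real.rpow_le_one_of_one_le_of_nonpos one_le_two (by linarith)
  have e : -(((m₁ : ℝ) + m₂) - 1) = -(2 * κ) := by rw [hκdef]; ring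
  rw [hbfun, e, norm_mul, norm_mul, norm_mul, norm_inv]
  calc _ ≤ 1 * (‖G‖⁻¹ * (K * (1 + ‖l‖) ^ N * (2 ^ (2 * κ) * t ^ (-(2 * κ))))) := by
        gcongr
        refine hSn.trans ?_
        have := sub_pos.2 hx.2
        gcongr
        exact one_sub_inv_cosh_sq_rpow_le hκ ht
    _ = (‖G‖⁻¹ * K * 2 ^ (2 * κ)) * (1 + ‖l‖) ^ N * t ^ (-(2 * κ)) := by ring
    _ ≤ _ := by
        gcongr
        linarith

end
end

section
/- There exist a constant C > 0 and a natural number M such that for every λ ∈ ℂ with Im λ > 0 and every t ≥ 1/2, |b_λ(t)| ≤ C (1+|λ|)^M e^{−(Im λ + ρ)t}. -/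
open Complex MeasureTheory Set

noncomputable section

theorem hasSum_regularizedGaussHGFun (a b c : ℂ) {z : ℂ} (hz : ‖z‖ < 1) :
    HasSum (fun n : ℕ => (ascPochhammer ℂ n).eval a * (ascPochhammer ℂ n).eval b /
      (n.factorial : ℂ) * (Gamma (c + n))⁻¹ * z ^ n) (regularizedGaussHGFun a b c z) := by
  have h := (regularizedGaussHGFunSeries a b c).hasSum (x := z) (by
    rw [mem_eball_zero_iff]
    refine lt_of_lt_of_le ?_ (radius_regularizedGaussHGFunSeries_ge_one a b c)
    rw [enorm_eq_nnnorm]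
    exact_mod_cast hz)
  refine h.congr_fun fun n => ?_
  rw [FormalMultilinearSeries.apply_eq_pow_smul_coeff, coeff_regularizedGaussHGFunSeries,
    smul_eq_mul]
  field_simp

/-- A contiguous relation raising the lower parameter. -/
theorem regularizedGaussHGFun_contiguous (a b c : ℂ) {z : ℂ} (hz : ‖z‖ < 1) :
    (1 - z) * regularizedGaussHGFun a b c z =
      (c - (2 * c + 1 - a - b) * z) * regularizedGaussHGFun a b (c + 1) z +
        (c + 1 - a) * (c + 1 - b) * z * regularizedGaussHGFun a b (c + 2) z := by
  have h0 := hasSum_regularizedGaussHGFun a b c hz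
  have h1 := hasSum_regularizedGaussHGFun a b (c + 1) hz
  have h2 := hasSum_regularizedGaussHGFun a b (c + 2) hz
  set h : ℕ → ℂ := fun n => n * ((ascPochhammer ℂ n).eval a * (ascPochhammer ℂ n).eval b /
      (n.factorial : ℂ) * (Gamma (c + 1 + n))⁻¹ * z ^ n) with hdef
  have hg (n : ℕ) : (Gamma (c + n))⁻¹ = (c + n) * (Gamma (c + 1 + n))⁻¹ := by
    rw [one_div_Gamma_eq_self_mul_one_div_Gamma_add_one]
    ring_nf
  have hg' (n : ℕ) : (Gamma (c + 1 + n))⁻¹ = (c + 1 + n) * (Gamma (c + 2 + n))⁻¹ := by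
    rw [one_div_Gamma_eq_self_mul_one_div_Gamma_add_one]
    ring_nf
  have hA : HasSum h (regularizedGaussHGFun a b c z - c * regularizedGaussHGFun a b (c + 1) z) := by
    refine (h0.sub (h1.mul_left c)).congr_fun fun n => ?_
    rw [hdef, hg n]
    ring
  have hB : HasSum (fun n => h (n + 1)) (z * (regularizedGaussHGFun a b c z -
      (2 * c + 1 - a - b) * regularizedGaussHGFun a b (c + 1) z +
      (c + 1 - a) * (c + 1 - b) * regularizedGaussHGFun a b (c + 2) z)) := by
    refine (((h0.sub (h1.mul_left (2 * c + 1 - a - b))).add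
      (h2.mul_left ((c + 1 - a) * (c + 1 - b)))).mul_left z).congr_fun fun n => ?_
    have e : c + 1 + ((n : ℂ) + 1) = c + 2 + n := by ring
    have f : ((n : ℂ) + 1) ≠ 0 := by exact_mod_cast n.succ_ne_zero
    have f' : (n.factorial : ℂ) ≠ 0 := by exact_mod_cast n.factorial_ne_zero
    simp only [hdef, e, hg n, hg' n, ascPochhammer_succ_eval, Nat.factorial_succ, Nat.cast_mul,
      Nat.cast_add, Nat.cast_one]
    field_simp
    ring
  have hC := (hasSum_nat_add_iff 1).1 hB
  have := hA.unique hC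
  simp [hdef] at this
  linear_combination this

theorem hasSum_one_sub_cpow_neg (a : ℂ) {z : ℂ} (hz : ‖z‖ < 1) :
    HasSum (fun n : ℕ => (ascPochhammer ℂ n).eval a / (n.factorial : ℂ) * z ^ n)
      ((1 - z) ^ (-a)) := by
  have h := (one_div_one_sub_cpow_hasFPowerSeriesOnBall_zero a).hasSum (y := z) (by
    rw [mem_eball_zero_iff, enorm_eq_nnnorm]
    exact_mod_cast hz)
  rw [zero_add, one_div, ← cpow_neg] at h
  refine h.congr_fun fun n => ?_
  have f' : (n.factorial : ℂ) ≠ 0 := by exact_mod_cast n.factorial_ne_zero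
  have := Ring.factorial_nsmul_multichoose_eq_ascPochhammer a n
  rw [Polynomial.ascPochhammer_smeval_cast, Polynomial.ascPochhammer_smeval_eq_eval,
    nsmul_eq_mul] at this
  rw [← this, mul_div_cancel_left₀ _ f', Ring.multichoose_eq]
  simp [FormalMultilinearSeries.ofScalars]

/-- The Euler integral representation of the regularized hypergeometric function. -/
theorem integral_eq_Gamma_mul_regularizedGaussHGFun (a : ℂ) {b d : ℂ} (hb : 0 < b.re)
    (hd : 0 < d.re) {x : ℝ} (hx0 : 0 ≤ x) (hx1 : x < 1) :
    ∫ u : ℝ in 0..1, (u : ℂ) ^ (b - 1) * (1 - (u : ℂ)) ^ (d - 1) * (1 - (x : ℂ) * u) ^ (-a) =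
      Gamma b * Gamma d * regularizedGaussHGFun a b (b + d) x := by
  have hxn : ‖(x : ℂ)‖ < 1 := by rwa [norm_real, Real.norm_of_nonneg hx0]
  have hS : Summable fun n : ℕ => ‖(ascPochhammer ℂ n).eval a / (n.factorial : ℂ) * (x : ℂ) ^ n‖ :=
    (hasSum_one_sub_cpow_neg a hxn).summable.norm
  have hbeta := betaIntegral_convergent hb hd
  have key := intervalIntegral.hasSum_integral_of_dominated_convergence (μ := volume)
    (a := (0 : ℝ)) (b := 1)
    (F := fun (n : ℕ) (u : ℝ) => (u : ℂ) ^ (b - 1) * (1 - (u : ℂ)) ^ (d - 1) *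
      ((ascPochhammer ℂ n).eval a / (n.factorial : ℂ) * ((x : ℂ) * u) ^ n))
    (f := fun u => (u : ℂ) ^ (b - 1) * (1 - (u : ℂ)) ^ (d - 1) * (1 - (x : ℂ) * u) ^ (-a))
    (fun n u => ‖(u : ℂ) ^ (b - 1) * (1 - (u : ℂ)) ^ (d - 1)‖ *
      ‖(ascPochhammer ℂ n).eval a / (n.factorial : ℂ) * (x : ℂ) ^ n‖)
    (fun n => by
      refine hbeta.def'.aestronglyMeasurable.mul ?_
      exact Continuous.aestronglyMeasurable (by fun_prop))
    (fun n => .of_forall fun u hu => by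
      rw [uIoc_of_le zero_le_one] at hu
      rw [norm_mul, mul_pow, ← mul_assoc, norm_mul _ ((u : ℂ) ^ n)]
      have : ‖(u : ℂ) ^ n‖ ≤ 1 := by
        rw [norm_pow, norm_real, Real.norm_of_nonneg hu.1.le]
        exact pow_le_one₀ hu.1.le hu.2
      gcongr
      exact mul_le_of_le_one_right (norm_nonneg _) this)
    (.of_forall fun u _ => hS.mul_left _)
    (by
      simp_rw [tsum_mul_left]
      exact hbeta.norm.mul_const _)
    (.of_forall fun u hu => by
      rw [uIoc_of_le zero_le_one] at hu
      refine (hasSum_one_sub_cpow_neg a ?_).mul_left _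
      rw [norm_mul, norm_real u, Real.norm_of_nonneg hu.1.le]
      exact (mul_le_of_le_one_right (norm_nonneg _) hu.2).trans_lt hxn)
  refine key.unique (((hasSum_regularizedGaussHGFun a b (b + d) hxn).mul_left
    (Gamma b * Gamma d)).congr_fun fun n => ?_)
  have hbn : 0 < (b + n).re := by simp; positivity
  have hB : ∫ u : ℝ in 0..1, (u : ℂ) ^ (b - 1) * (1 - (u : ℂ)) ^ (d - 1) *
      ((ascPochhammer ℂ n).eval a / (n.factorial : ℂ) * ((x : ℂ) * u) ^ n) =
      (ascPochhammer ℂ n).eval a / (n.factorial : ℂ) * (x : ℂ) ^ n * betaIntegral (b + n) d := by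
    rw [betaIntegral, ← intervalIntegral.integral_const_mul]
    refine intervalIntegral.integral_congr_ae (.of_forall fun u hu => ?_)
    rw [uIoc_of_le zero_le_one] at hu
    have hu0 : (u : ℂ) ≠ 0 := by exact_mod_cast hu.1.ne'
    rw [show b + n - 1 = (b - 1) + n by ring, cpow_add _ _ hu0, cpow_natCast]
    ring
  rw [hB, betaIntegral_eq_Gamma_mul_div _ _ hbn hd, ← Gamma_add_nat_div_Gamma_eq b]
  · have := Gamma_ne_zero_of_re_pos hb
    rw [show b + d + n = b + n + d by ring]
    field_simp
  · rintro k rfl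
    simp only [neg_re, natCast_re, Left.neg_pos_iff] at hb
    exact hb.not_ge k.cast_nonneg

theorem intervalIntegrable_and_integral_rpow_neg :
    IntervalIntegrable (fun u : ℝ => u ^ (-(3 / 4) : ℝ)) volume 0 1 ∧
      ∫ u : ℝ in 0..1, u ^ (-(3 / 4) : ℝ) = 4 := by
  refine ⟨intervalIntegral.intervalIntegrable_rpow' (by norm_num), ?_⟩
  rw [integral_rpow (Or.inl (by norm_num)), Real.zero_rpow (by norm_num)]
  norm_num

theorem norm_Gamma_le_mul_norm_Gamma_add {z : ℂ} {η : ℝ} (hz : 1 / 4 ≤ z.re) (hη : 1 ≤ η) :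
    ‖Gamma z‖ ≤ 4 / Real.Gamma η * ‖Gamma (z + η)‖ := by
  have hz0 : 0 < z.re := by linarith
  have hη0 : 0 < η := by linarith
  have hG := Real.Gamma_pos_of_pos hη0
  have hB : ‖betaIntegral z η‖ ≤ 4 := by
    rw [← intervalIntegrable_and_integral_rpow_neg.2]
    refine intervalIntegral.norm_integral_le_of_norm_le zero_le_one (.of_forall fun u hu => ?_)
      intervalIntegrable_and_integral_rpow_neg.1
    rcases hu.2.eq_or_lt with rfl | hu1
    · rcases eq_or_ne ((η : ℂ) - 1) 0 with h | h
      · simp [h]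
      · simp [zero_cpow h]
    · rw [norm_mul, norm_cpow_eq_rpow_re_of_pos hu.1, ← ofReal_one, ← ofReal_sub,
        norm_cpow_eq_rpow_re_of_pos (by linarith), ← mul_one (u ^ (-(3 / 4) : ℝ))]
      refine mul_le_mul ?_ ?_ (Real.rpow_nonneg (by linarith) _) (Real.rpow_nonneg hu.1.le _)
      · exact Real.rpow_le_rpow_of_exponent_ge hu.1 hu.2 (by simp; linarith)
      · exact Real.rpow_le_one (by linarith) (by linarith [hu.1]) (by simpa using hη)
  have := Gamma_mul_Gamma_eq_betaIntegral hz0 (t := (η : ℂ)) (by simpa using hη0)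
  have h2 := congrArg norm this
  rw [norm_mul, norm_mul, Gamma_ofReal, norm_real, Real.norm_of_nonneg hG.le] at h2
  rw [div_mul_eq_mul_div, le_div_iff₀ hG, h2, mul_comm]
  gcongr

theorem mul_one_sub_div_le {u x : ℝ} (hx1 : x < 1) (hu0 : 0 ≤ u) (hu1 : u ≤ 1) (hx0 : 0 ≤ x) :
    u * (1 - u) / (1 - x * u) ≤ ((1 + √(1 - x)) ^ 2)⁻¹ := by
  have h1 : 0 < 1 - x * u := by nlinarith
  have hw : 0 ≤ √(1 - x) := Real.sqrt_nonneg _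
  have hw2 : √(1 - x) ^ 2 = 1 - x := Real.sq_sqrt (by linarith)
  rw [← one_div, div_le_div_iff₀ h1 (by positivity)]
  nlinarith [sq_nonneg (1 - u * (1 + √(1 - x)))]

theorem norm_euler_integrand_le {α β δ : ℝ} (hα : 0 ≤ α) (hβ : 1 / 4 ≤ β) (hδ : 1 ≤ δ) {μ : ℂ}
    (hμ : 0 < μ.re) {x u : ℝ} (hx0 : 0 ≤ x) (hx1 : x < 1) (hu0 : 0 < u) (hu1 : u < 1) :
    ‖(u : ℂ) ^ (β + μ / 2 - 1) * (1 - (u : ℂ)) ^ (δ + μ / 2 - 1) *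
      (1 - (x : ℂ) * u) ^ (-(α + μ / 2))‖ ≤
    u ^ (-(3 / 4) : ℝ) * ((1 - x) ^ (-α) * (1 + √(1 - x)) ^ (-μ.re)) := by
  have h1 : 0 < 1 - x * u := by nlinarith
  have h2 : 0 < 1 - u := by linarith
  have hw : 0 ≤ √(1 - x) := Real.sqrt_nonneg _
  have e1 : (1 - (u : ℂ)) = ((1 - u : ℝ) : ℂ) := by push_cast; rfl
  have e2 : (1 - (x : ℂ) * u) = ((1 - x * u : ℝ) : ℂ) := by push_cast; rfl
  rw [norm_mul, norm_mul, e1, e2, norm_cpow_eq_rpow_re_of_pos hu0, norm_cpow_eq_rpow_re_of_pos h2,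
    norm_cpow_eq_rpow_re_of_pos h1]
  have r1 : (β + μ / 2 - 1 : ℂ).re = (β - 1) + μ.re / 2 := by simp; ring
  have r2 : (δ + μ / 2 - 1 : ℂ).re = (δ - 1) + μ.re / 2 := by simp; ring
  have r3 : (-(α + μ / 2) : ℂ).re = -α + -(μ.re / 2) := by simp; ring
  rw [r1, r2, r3, Real.rpow_add hu0, Real.rpow_add h2, Real.rpow_add h1,
    Real.rpow_neg h1.le (μ.re / 2)]
  have hs : u ^ (μ.re / 2) * (1 - u) ^ (μ.re / 2) * ((1 - x * u) ^ (μ.re / 2))⁻¹ ≤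
      (1 + √(1 - x)) ^ (-μ.re) := by
    rw [← Real.mul_rpow hu0.le h2.le, ← div_eq_mul_inv, ← Real.div_rpow (by positivity) h1.le]
    calc _ ≤ (((1 + √(1 - x)) ^ 2)⁻¹) ^ (μ.re / 2) :=
          Real.rpow_le_rpow (by positivity) (mul_one_sub_div_le hx1 hu0.le hu1.le hx0)
            (by linarith)
      _ = _ := by
          rw [Real.inv_rpow (by positivity), ← Real.rpow_natCast, ← Real.rpow_mul (by positivity),
            Real.rpow_neg (by positivity)]
          congr 2
          push_cast; ring
  calc _ = u ^ (β - 1) * (1 - u) ^ (δ - 1) * ((1 - x * u) ^ (-α) *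
        (u ^ (μ.re / 2) * (1 - u) ^ (μ.re / 2) * ((1 - x * u) ^ (μ.re / 2))⁻¹)) := by ring
    _ ≤ u ^ (-(3 / 4) : ℝ) * 1 * ((1 - x) ^ (-α) * (1 + √(1 - x)) ^ (-μ.re)) := by
        gcongr ?_ * ?_ * (?_ * ?_)
        · exact Real.rpow_le_rpow_of_exponent_ge hu0 hu1.le (by linarith)
        · exact Real.rpow_le_one h2.le (by linarith) (by linarith)
        · exact Real.rpow_le_rpow_of_nonpos (by linarith) (by nlinarith) (by linarith)
    _ = _ := by ring

theorem norm_Gamma_mul_Gamma_mul_regularizedGaussHGFun_le {α β δ : ℝ} (hα : 1 / 4 ≤ α)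
    (hβ : 1 / 4 ≤ β) (hδ : 1 + α ≤ δ) {μ : ℂ} (hμ : 0 < μ.re) {x : ℝ} (hx0 : 0 ≤ x)
    (hx1 : x < 1) :
    ‖Gamma (α + μ / 2) * Gamma (β + μ / 2) *
      regularizedGaussHGFun (α + μ / 2) (β + μ / 2) (β + δ + μ) x‖ ≤
    16 / Real.Gamma (δ - α) * ((1 - x) ^ (-α) * (1 + √(1 - x)) ^ (-μ.re)) := by
  have hb : 0 < (β + μ / 2 : ℂ).re := by simp; linarith
  have hd : 0 < (δ + μ / 2 : ℂ).re := by simp; linarith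
  have hE := integral_eq_Gamma_mul_regularizedGaussHGFun (α + μ / 2) hb hd hx0 hx1
  have hI := intervalIntegral.norm_integral_le_of_norm_le (μ := volume) zero_le_one
    (f := fun u : ℝ =>
      (u : ℂ) ^ (β + μ / 2 - 1) * (1 - (u : ℂ)) ^ (δ + μ / 2 - 1) *
      (1 - (x : ℂ) * u) ^ (-(α + μ / 2)))
    (g := fun u : ℝ => u ^ (-(3 / 4) : ℝ) * ((1 - x) ^ (-α) * (1 + √(1 - x)) ^ (-μ.re)))
    (by
      filter_upwards [compl_mem_ae_iff.2 (measure_singleton (1 : ℝ))] with u hu1 hu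
      exact norm_euler_integrand_le (by linarith) hβ (by linarith) hμ hx0 hx1 hu.1
        (lt_of_le_of_ne hu.2 hu1))
    (intervalIntegrable_and_integral_rpow_neg.1.mul_const _)
  rw [intervalIntegral.integral_mul_const, intervalIntegrable_and_integral_rpow_neg.2, hE] at hI
  rw [show (β + μ / 2 + (δ + μ / 2) : ℂ) = β + δ + μ by ring] at hI
  have hG := norm_Gamma_le_mul_norm_Gamma_add (z := α + μ / 2) (η := δ - α)
    (by simp; linarith) (by linarith)
  rw [show (α + μ / 2 + ((δ - α : ℝ) : ℂ) : ℂ) = δ + μ / 2 by push_cast; ring] at hG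
  have hGp := Real.Gamma_pos_of_pos (show 0 < δ - α by linarith)
  rw [norm_mul, norm_mul] at hI ⊢
  calc _ ≤ (4 / Real.Gamma (δ - α) * ‖Gamma (δ + μ / 2)‖) * ‖Gamma (β + μ / 2)‖ *
        ‖regularizedGaussHGFun (α + μ / 2) (β + μ / 2) (β + δ + μ) x‖ := by gcongr
    _ = 4 / Real.Gamma (δ - α) * (‖Gamma (β + μ / 2)‖ * ‖Gamma (δ + μ / 2)‖ *
        ‖regularizedGaussHGFun (α + μ / 2) (β + μ / 2) (β + δ + μ) x‖) := by ring
    _ ≤ 4 / Real.Gamma (δ - α) * (4 * ((1 - x) ^ (-α) * (1 + √(1 - x)) ^ (-μ.re))) := by gcongr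
    _ = _ := by ring

/-- Uniform bound for the hypergeometric function with lower parameter `1 + μ + k`: the Euler integral
applies for large `k`, and each step down costs at most a polynomial factor in `μ`. -/
theorem exists_norm_Gamma_mul_Gamma_mul_regularizedGaussHGFun_le {α β : ℝ} (hα : 1 / 4 ≤ α)
    (hβ : 1 / 4 ≤ β) {x₀ : ℝ} (hx₀ : x₀ < 1) (j k : ℕ) (hjk : α + β ≤ k + j) :
    ∃ (C : ℝ) (M : ℕ), 0 < C ∧ ∀ μ : ℂ, 0 < μ.re → ∀ x : ℝ, 0 ≤ x → x ≤ x₀ →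
      ‖Gamma (α + μ / 2) * Gamma (β + μ / 2) *
        regularizedGaussHGFun (α + μ / 2) (β + μ / 2) (1 + μ + k) x‖ ≤
      C * (1 + ‖μ‖) ^ M * (1 + √(1 - x)) ^ (-μ.re) := by
  have hy : 0 < 1 - x₀ := by linarith
  induction j generalizing k with
  | zero =>
    rw [Nat.cast_zero, add_zero] at hjk
    have hGp := Real.Gamma_pos_of_pos (show 0 < 1 + k - β - α by linarith)
    refine ⟨16 / Real.Gamma (1 + k - β - α) * (1 - x₀) ^ (-α), 0, by positivity,
      fun μ hμ x hx0 hx => ?_⟩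
    have := norm_Gamma_mul_Gamma_mul_regularizedGaussHGFun_le hα hβ (δ := 1 + k - β)
      (by linarith) hμ hx0 (by linarith)
    rw [show ((β : ℂ) + ((1 + k - β : ℝ) : ℂ) + μ) = 1 + μ + k by push_cast; ring] at this
    refine this.trans ?_
    rw [pow_zero, mul_one, mul_assoc]
    have hw : 0 ≤ √(1 - x) := Real.sqrt_nonneg _
    gcongr ?_ * (?_ * ?_)
    exact Real.rpow_le_rpow_of_nonpos hy (by linarith) (by linarith)
  | succ j ih =>
    push_cast at hjk
    obtain ⟨C₁, M₁, hC₁, h₁⟩ := ih (k + 1) (by push_cast; linarith)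
    obtain ⟨C₂, M₂, hC₂, h₂⟩ := ih (k + 2) (by push_cast; linarith)
    set K : ℝ := 3 * k + 6 + α + β with hK
    have hKp : 0 < K := by positivity
    refine ⟨(K * C₁ + K ^ 2 * C₂) / (1 - x₀), 2 + M₁ + M₂, by positivity,
      fun μ hμ x hx0 hx => ?_⟩
    have g₁ := h₁ μ hμ x hx0 hx
    have g₂ := h₂ μ hμ x hx0 hx
    have hxn : ‖(x : ℂ)‖ = x := by rw [norm_real, Real.norm_of_nonneg hx0]
    have hc := regularizedGaussHGFun_contiguous (α + μ / 2) (β + μ / 2) (1 + μ + k) (z := (x : ℂ))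
      (by rw [hxn]; linarith)
    have hx1 : x ≤ 1 := by linarith
    have nn := norm_nonneg μ
    have nα : ‖(α : ℂ)‖ = α := by rw [norm_real, Real.norm_of_nonneg (by linarith)]
    have nβ : ‖(β : ℂ)‖ = β := by rw [norm_real, Real.norm_of_nonneg (by linarith)]
    have nk : ‖(k : ℂ)‖ = k := Complex.norm_natCast k
    have nk0 : (0 : ℝ) ≤ k := k.cast_nonneg
    have nμ2 : ‖μ / 2‖ = ‖μ‖ / 2 := by simp
    have b₁ : ‖(1 + μ + k) - (2 * (1 + μ + k) + 1 - (α + μ / 2) - (β + μ / 2)) * (x : ℂ)‖ ≤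
        K * (1 + ‖μ‖) := by
      have t₁ : ‖(1 + μ + k : ℂ)‖ ≤ 1 + ‖μ‖ + k := by
        refine norm_add₃_le.trans ?_
        simp
      have t₂ : ‖2 * (1 + μ + k) + 1 - (α + μ / 2) - (β + μ / 2)‖ ≤
          3 + 2 * k + ‖μ‖ + α + β := by
        rw [show 2 * (1 + μ + k) + 1 - (α + μ / 2) - (β + μ / 2) =
          ((3 + 2 * k : ℕ) : ℂ) + μ - α - β by push_cast; ring]
        refine (norm_sub_le _ _).trans ?_
        refine (add_le_add_left ((norm_sub_le _ _).trans
          (add_le_add_left (norm_add_le _ _) _)) _).trans ?_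
        rw [nα, nβ, Complex.norm_natCast]
        push_cast
        exact le_rfl
      refine (norm_sub_le _ _).trans ?_
      rw [norm_mul, hxn]
      have t₃ := mul_le_of_le_one_right (norm_nonneg
        (2 * (1 + μ + k) + 1 - (α + μ / 2) - (β + μ / 2))) hx1
      nlinarith
    have b₂ {γ : ℝ} (hγ : 0 ≤ γ) (hγK : γ + 2 + k ≤ K) :
        ‖1 + μ + k + 1 - (γ + μ / 2)‖ ≤ K * (1 + ‖μ‖) := by
      rw [show 1 + μ + k + 1 - (γ + μ / 2) = ((2 + k : ℕ) : ℂ) + μ / 2 - γ by push_cast; ring]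
      refine (norm_sub_le _ _).trans ((add_le_add_left (norm_add_le _ _) _).trans ?_)
      rw [Complex.norm_natCast, nμ2, norm_real, Real.norm_of_nonneg hγ]
      push_cast
      nlinarith
    have b₃ : ‖(1 + μ + k + 1 - (α + μ / 2)) * (1 + μ + k + 1 - (β + μ / 2)) * (x : ℂ)‖ ≤
        K ^ 2 * (1 + ‖μ‖) ^ 2 := by
      rw [norm_mul, norm_mul, hxn, ← mul_pow, sq]
      refine (mul_le_of_le_one_right (by positivity) hx1).trans ?_
      exact mul_le_mul (b₂ (by linarith) (by linarith)) (b₂ (by linarith) (by linarith))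
        (norm_nonneg _) (by positivity)
    set P := Gamma (α + μ / 2) * Gamma (β + μ / 2)
    set W := (1 + √(1 - x)) ^ (-μ.re)
    have hW : 0 ≤ W := by positivity
    push_cast at g₁ g₂
    rw [← add_assoc] at g₁ g₂
    have hy' : 0 < 1 - x := by linarith
    have n1x : ‖(1 - (x : ℂ))‖ = 1 - x := by
      rw [← ofReal_one, ← ofReal_sub, norm_real, Real.norm_of_nonneg hy'.le]
    have hle : 1 ≤ 1 + ‖μ‖ := by linarith
    rw [div_mul_eq_mul_div, div_mul_eq_mul_div, le_div_iff₀ hy]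
    calc ‖P * regularizedGaussHGFun (α + μ / 2) (β + μ / 2) (1 + μ + k) x‖ * (1 - x₀)
        ≤ ‖P * regularizedGaussHGFun (α + μ / 2) (β + μ / 2) (1 + μ + k) x‖ * (1 - x) := by
          gcongr
      _ = ‖P * ((1 - (x : ℂ)) *
            regularizedGaussHGFun (α + μ / 2) (β + μ / 2) (1 + μ + k) x)‖ := by
          simp only [norm_mul, n1x]; ring
      _ ≤ K * (1 + ‖μ‖) * (C₁ * (1 + ‖μ‖) ^ M₁ * W) +
            K ^ 2 * (1 + ‖μ‖) ^ 2 * (C₂ * (1 + ‖μ‖) ^ M₂ * W) := by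
          rw [hc, mul_add, mul_left_comm, mul_left_comm P]
          refine (norm_add_le _ _).trans ?_
          rw [norm_mul, norm_mul (_ * _ * (x : ℂ))]
          gcongr
      _ ≤ K * (C₁ * (1 + ‖μ‖) ^ (2 + M₁ + M₂) * W) +
            K ^ 2 * (C₂ * (1 + ‖μ‖) ^ (2 + M₁ + M₂) * W) := by
          have p₁ : (1 + ‖μ‖) ^ (1 + M₁) ≤ (1 + ‖μ‖) ^ (2 + M₁ + M₂) :=
            pow_le_pow_right₀ hle (by omega)
          have p₂ : (1 + ‖μ‖) ^ (2 + M₂) ≤ (1 + ‖μ‖) ^ (2 + M₁ + M₂) :=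
            pow_le_pow_right₀ hle (by omega)
          refine add_le_add ?_ ?_
          · calc _ = K * (C₁ * (1 + ‖μ‖) ^ (1 + M₁) * W) := by ring
              _ ≤ _ := by gcongr
          · calc _ = K ^ 2 * (C₂ * (1 + ‖μ‖) ^ (2 + M₂) * W) := by ring
              _ ≤ _ := by gcongr
      _ = _ := by ring

theorem hyp_div_Gamma_eq {a b c x : ℂ} (hc : ∀ k : ℕ, c ≠ -k) (hx : ‖x‖ < 1) :
    hyp a b c x / Gamma c = regularizedGaussHGFun a b c x := by
  rw [← (hasSum_regularizedGaussHGFun a b c hx).tsum_eq, hyp, ← tsum_div_const]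
  refine tsum_congr fun n => ?_
  rw [← Gamma_add_nat_div_Gamma_eq c hc]
  have := Gamma_ne_zero hc
  field_simp

theorem one_sub_inv_cosh_sq (t : ℝ) : 1 - (Real.cosh t ^ 2)⁻¹ = Real.tanh t ^ 2 := by
  have := (Real.cosh_pos t).ne'
  rw [Real.tanh_eq_sinh_div_cosh, div_pow, Real.sinh_sq]
  field_simp

theorem two_rpow_mul_two_cosh_rpow_mul_le {s ρ t : ℝ} (hρ : 0 ≤ ρ) :
    (2 : ℝ) ^ (-ρ - 1 + s) * (2 * Real.cosh t) ^ (-s - ρ) * (1 + Real.tanh t) ^ (-s) ≤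
      Real.exp (-(s + ρ) * t) := by
  have hc := Real.cosh_pos t
  have h1 : 1 + Real.tanh t = 2 * Real.exp t / (2 * Real.cosh t) := by
    rw [Real.tanh_eq_sinh_div_cosh, ← Real.cosh_add_sinh]
    field_simp
  have he : Real.exp t ≤ 2 * Real.cosh t := by
    rw [Real.cosh_eq]
    linarith [Real.exp_pos (-t)]
  rw [h1, Real.div_rpow (by positivity) (by positivity),
    Real.mul_rpow (y := Real.exp t) zero_le_two (by positivity),
    show -s - ρ = -s + -ρ by ring, Real.rpow_add (by positivity) (-s),
    Real.rpow_add zero_lt_two, Real.rpow_neg zero_le_two s]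
  have h2 : (2 : ℝ) ^ s ≠ 0 := by positivity
  have h3 : (2 * Real.cosh t) ^ (-s) ≠ 0 := by positivity
  have h4 : (2 : ℝ) ^ (-ρ - 1) ≤ 1 := Real.rpow_le_one_of_one_le_of_nonpos one_le_two (by linarith)
  have h5 : (2 * Real.cosh t) ^ (-ρ) ≤ Real.exp t ^ (-ρ) :=
    Real.rpow_le_rpow_of_nonpos (Real.exp_pos t) he (by linarith)
  calc _ = (2 : ℝ) ^ (-ρ - 1) * (Real.exp t ^ (-s) * (2 * Real.cosh t) ^ (-ρ)) := by
        generalize (2 * Real.cosh t) ^ (-s) = y at h3 ⊢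
        field_simp
    _ ≤ 1 * (Real.exp t ^ (-s) * Real.exp t ^ (-ρ)) := by gcongr
    _ = _ := by
        rw [one_mul, ← Real.exp_mul, ← Real.exp_mul, ← Real.exp_add]
        ring_nf

theorem norm_bfun_eq (m₁ m₂ : ℕ) {l : ℂ} (hl : 0 < l.im) {t : ℝ} (ht : t ≠ 0) :
    ‖bfun m₁ m₂ l t‖ = ((2 : ℝ) ^ (-rho m₁ m₂ - 1 + l.im) *
      (2 * Real.cosh t) ^ (-l.im - rho m₁ m₂)) *
      ‖Gamma (((m₁ : ℂ) + (m₂ : ℂ) + 1) / 2)‖⁻¹ *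
      ‖Gamma ((rho m₁ m₂ / 2 : ℝ) + -(I * l) / 2) * Gamma (((m₁ + 2) / 4 : ℝ) + -(I * l) / 2) *
        regularizedGaussHGFun ((rho m₁ m₂ / 2 : ℝ) + -(I * l) / 2)
          (((m₁ + 2) / 4 : ℝ) + -(I * l) / 2) (1 + -(I * l) + (0 : ℕ))
          (((Real.cosh t ^ 2)⁻¹ : ℝ) : ℂ)‖ := by
  have hc := Real.cosh_pos t
  have hx : ‖(((Real.cosh t ^ 2 : ℝ) : ℂ))⁻¹‖ < 1 := by
    rw [norm_inv, norm_real, Real.norm_of_nonneg (by positivity)]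
    exact inv_lt_one_of_one_lt₀ (one_lt_pow₀ (Real.one_lt_cosh.2 ht) two_ne_zero)
  have hre : 0 < (1 - I * l).re := by simp; linarith
  have hneg : ∀ k : ℕ, 1 - I * l ≠ -k := fun k h => by
    rw [h, neg_re, natCast_re, Left.neg_pos_iff] at hre
    exact hre.not_ge k.cast_nonneg
  have ea : ((rho m₁ m₂ / 2 : ℝ) + -(I * l) / 2 : ℂ) = ((rho m₁ m₂ : ℂ) - I * l) / 2 := by
    push_cast; ring
  have eb : (((m₁ + 2) / 4 : ℝ) + -(I * l) / 2 : ℂ) = ((m₁ : ℂ) + 2) / 4 - I * l / 2 := by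
    push_cast; ring
  have ec : (1 + -(I * l) + (0 : ℕ) : ℂ) = 1 - I * l := by push_cast; ring
  rw [ea, eb, ec, ofReal_inv, ← hyp_div_Gamma_eq hneg hx, bfun, Phi]
  have n1 : ‖(2 : ℂ) ^ (-(rho m₁ m₂ : ℂ) - 1 - I * l)‖ = (2 : ℝ) ^ (-rho m₁ m₂ - 1 + l.im) := by
    have := norm_cpow_eq_rpow_re_of_pos zero_lt_two (-(rho m₁ m₂ : ℂ) - 1 - I * l)
    rw [ofReal_ofNat] at this
    rw [this]
    congr 1
    simp
  have n2 : ‖((2 * Real.cosh t : ℝ) : ℂ) ^ (I * l - (rho m₁ m₂ : ℂ))‖ =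
      (2 * Real.cosh t) ^ (-l.im - rho m₁ m₂) := by
    rw [norm_cpow_eq_rpow_re_of_pos (by positivity)]
    congr 1
    simp
  rw [← n1, ← n2]
  simp only [norm_mul, norm_div]
  ring

theorem stmt2 (m₁ m₂ : ℕ) (hm₁ : 1 ≤ m₁) :
    ∃ (C : ℝ) (M : ℕ), 0 < C ∧
      ∀ l : ℂ, 0 < l.im → ∀ t : ℝ, 1 / 2 ≤ t →
        ‖bfun m₁ m₂ l t‖ ≤ C * (1 + ‖l‖) ^ M * Real.exp (-(l.im + rho m₁ m₂) * t) := by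
  have hm : (1 : ℝ) ≤ m₁ := by exact_mod_cast hm₁
  have hm₂ : (0 : ℝ) ≤ m₂ := m₂.cast_nonneg
  have hρ : 1 / 2 ≤ rho m₁ m₂ := by
    unfold rho
    linarith
  have hx₀ : (Real.cosh (1 / 2) ^ 2)⁻¹ < 1 :=
    inv_lt_one_of_one_lt₀ (one_lt_pow₀ (Real.one_lt_cosh.2 (by norm_num)) two_ne_zero)
  obtain ⟨C, M, hC, h⟩ := exists_norm_Gamma_mul_Gamma_mul_regularizedGaussHGFun_le
    (α := rho m₁ m₂ / 2) (β := (m₁ + 2) / 4) (by linarith) (by linarith) hx₀ (m₁ + m₂) 0 (by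
      unfold rho
      push_cast
      linarith)
  have hG : 0 < ‖Gamma (((m₁ : ℂ) + (m₂ : ℂ) + 1) / 2)‖ := by
    refine norm_pos_iff.2 (Gamma_ne_zero_of_re_pos ?_)
    rw [show ((m₁ : ℂ) + (m₂ : ℂ) + 1) / 2 = (((m₁ + m₂ + 1) / 2 : ℝ) : ℂ) by push_cast; rfl,
      ofReal_re]
    positivity
  refine ⟨‖Gamma (((m₁ : ℂ) + (m₂ : ℂ) + 1) / 2)‖⁻¹ * C, M, by positivity, fun l hl t ht => ?_⟩
  have ht0 : 0 < t := by linarith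
  have hre : (-(I * l)).re = l.im := by simp
  have hcosh : Real.cosh (1 / 2) ≤ Real.cosh t := by
    rw [Real.cosh_le_cosh, abs_of_pos ht0, abs_of_pos (by norm_num)]
    exact ht
  have hcp := Real.cosh_pos (1 / 2)
  have htanh : 0 ≤ Real.tanh t := by
    rw [Real.tanh_eq_sinh_div_cosh]
    exact div_nonneg (Real.sinh_nonneg_iff.2 ht0.le) (Real.cosh_pos t).le
  have key := h (-(I * l)) (by rwa [hre]) (Real.cosh t ^ 2)⁻¹ (by positivity) (by gcongr)
  rw [one_sub_inv_cosh_sq, Real.sqrt_sq htanh, hre, norm_neg, norm_mul I, norm_I,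
    one_mul] at key
  rw [norm_bfun_eq m₁ m₂ hl ht0.ne']
  have hexp := two_rpow_mul_two_cosh_rpow_mul_le (s := l.im) (ρ := rho m₁ m₂) (t := t)
    (by linarith)
  calc _ ≤ ((2 : ℝ) ^ (-rho m₁ m₂ - 1 + l.im) *
        (2 * Real.cosh t) ^ (-l.im - rho m₁ m₂)) * ‖Gamma (((m₁ : ℂ) + (m₂ : ℂ) + 1) / 2)‖⁻¹ *
        (C * (1 + ‖l‖) ^ M * (1 + Real.tanh t) ^ (-l.im)) := by
        have := Real.cosh_pos t
        gcongr
    _ = ‖Gamma (((m₁ : ℂ) + (m₂ : ℂ) + 1) / 2)‖⁻¹ * C * (1 + ‖l‖) ^ M *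
        ((2 : ℝ) ^ (-rho m₁ m₂ - 1 + l.im) *
        (2 * Real.cosh t) ^ (-l.im - rho m₁ m₂) * (1 + Real.tanh t) ^ (-l.im)) := by ring
    _ ≤ _ := by gcongr

end
end

section
/- For every λ ∈ ℂ with Im λ > 0: (a) ∫₀^{1/2} |b_λ(t)| Δ(t) dt < ∞; (b) if moreover Im λ > ρ then ∫₀^∞ |b_λ(t)| Δ(t) dt < ∞; (c) ∫_{1/2}^∞ |b_λ(t)|² Δ(t) dt < ∞; (d) there exists p with 1 ≤ p < 2 (depending on λ) such that ∫_{1/2}^∞ |b_λ(t)|^p Δ(t) dt < ∞. -/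
open Complex MeasureTheory Set

noncomputable section

theorem hasSum_ascPochhammer_mul_pow (s : ℝ) {x : ℝ} (hx : |x| < 1) :
    HasSum (fun n : ℕ => (ascPochhammer ℝ n).eval s / (n.factorial : ℝ) * x ^ n)
      (1 / (1 - x) ^ s) := by
  have h := (Real.one_div_one_sub_rpow_hasFPowerSeriesOnBall_zero s).hasSum (y := x)
    (by simpa [← ofReal_norm] using hx)
  rw [zero_add] at h
  convert! h using 2 with n
  rw [FormalMultilinearSeries.ofScalars_apply_eq, ← Ring.multichoose_eq, smul_eq_mul]
  congr 1
  rw [div_eq_iff (by positivity), mul_comm, ← nsmul_eq_mul,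
    Ring.factorial_nsmul_multichoose_eq_ascPochhammer, Polynomial.ascPochhammer_smeval_eq_eval]

theorem eventually_norm_mul_le {a b c : ℂ} {s : ℝ} (hs : (a + b).re < s + c.re) :
    ∀ᶠ n : ℕ in Filter.atTop, ‖a + n‖ * ‖b + n‖ ≤ (s + n) * ‖c + n‖ := by
  have key : ∀ᶠ x : ℝ in Filter.atTop,
      ((a.re + x) ^ 2 + a.im ^ 2) * ((b.re + x) ^ 2 + b.im ^ 2)
        ≤ (s + x) ^ 2 * ((c.re + x) ^ 2 + c.im ^ 2) := by
    obtain ⟨δ, hδ, hs⟩ : ∃ δ > 0, s + c.re - a.re - b.re = δ :=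
      ⟨_, by simp at hs; linarith, rfl⟩
    set p := s ^ 2 + 4 * s * c.re + (c.re ^ 2 + c.im ^ 2)
      - (a.re ^ 2 + a.im ^ 2) - (b.re ^ 2 + b.im ^ 2) - 4 * a.re * b.re with hp
    set q := 2 * s * (c.re ^ 2 + c.im ^ 2) + 2 * s ^ 2 * c.re
      - 2 * a.re * (b.re ^ 2 + b.im ^ 2) - 2 * b.re * (a.re ^ 2 + a.im ^ 2) with hq
    set r := s ^ 2 * (c.re ^ 2 + c.im ^ 2)
      - (a.re ^ 2 + a.im ^ 2) * (b.re ^ 2 + b.im ^ 2) with hr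
    filter_upwards [Filter.eventually_ge_atTop 1,
      Filter.eventually_ge_atTop ((|p| + |q| + |r|) / (2 * δ))] with x h1 h2
    rw [div_le_iff₀ (by positivity)] at h2
    have e : (s + x) ^ 2 * ((c.re + x) ^ 2 + c.im ^ 2)
        - ((a.re + x) ^ 2 + a.im ^ 2) * ((b.re + x) ^ 2 + b.im ^ 2)
        = 2 * δ * x ^ 3 + p * x ^ 2 + q * x + r := by
      rw [← hs, hp, hq, hr]; ring
    have hx2 : x ≤ x ^ 2 := by nlinarith
    have i1 : -|p| * x ^ 2 ≤ p * x ^ 2 := by gcongr; exact neg_abs_le p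
    have i2 : -|q| * x ^ 2 ≤ q * x := by
      nlinarith [neg_abs_le q, abs_nonneg q]
    have i3 : -|r| * x ^ 2 ≤ r := by
      nlinarith [neg_abs_le r, abs_nonneg r]
    have i4 : (|p| + |q| + |r|) * x ^ 2 ≤ x * (2 * δ) * x ^ 2 := by gcongr
    nlinarith
  filter_upwards [tendsto_natCast_atTop_atTop.eventually key,
    tendsto_natCast_atTop_atTop.eventually (Filter.eventually_ge_atTop (-s))] with n h1 h2
  refine le_of_sq_le_sq ?_ (mul_nonneg (by linarith) (norm_nonneg _))
  simp only [mul_pow, Complex.sq_norm, Complex.normSq_apply]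
  simp
  nlinarith

theorem exists_norm_coeff_le {a b c : ℂ} {s : ℝ} (hc : 0 < c.re) (hs0 : 0 < s)
    (hs : (a + b).re < s + c.re) :
    ∃ C : ℝ, 0 ≤ C ∧ ∀ n : ℕ, ‖(ascPochhammer ℂ n).eval a * (ascPochhammer ℂ n).eval b /
      ((ascPochhammer ℂ n).eval c * (n.factorial : ℂ))‖ ≤
        C * ((ascPochhammer ℝ n).eval s / (n.factorial : ℝ)) := by
  obtain ⟨N, hN⟩ := Filter.eventually_atTop.1 (eventually_norm_mul_le hs)
  set u : ℕ → ℂ := fun n => (ascPochhammer ℂ n).eval a * (ascPochhammer ℂ n).eval b /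
      ((ascPochhammer ℂ n).eval c * (n.factorial : ℂ)) with hu
  set d : ℕ → ℝ := fun n => (ascPochhammer ℝ n).eval s / (n.factorial : ℝ) with hd
  have hdpos : ∀ n, 0 < d n := fun n => div_pos (ascPochhammer_pos n s hs0) (by positivity)
  have hud : ∀ n, u (n + 1) = u n * ((a + n) * (b + n) / ((c + n) * (n + 1))) := fun n => by
    simp only [hu, ascPochhammer_succ_eval, Nat.factorial_succ]
    push_cast
    rw [div_mul_div_comm]
    congr 1 <;> ring
  have hdd : ∀ n, d (n + 1) = d n * ((s + n) / (n + 1)) := fun n => by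
    simp only [hd, ascPochhammer_succ_eval, Nat.factorial_succ]
    push_cast
    rw [div_mul_div_comm]
    congr 1; ring
  have hC : ∀ n ≤ N, ‖u n‖ ≤ (∑ k ∈ Finset.range (N + 1), ‖u k‖ / d k) * d n := fun n hn => by
    rw [← div_le_iff₀ (hdpos n)]
    exact Finset.single_le_sum (f := fun k => ‖u k‖ / d k)
      (fun k _ => div_nonneg (norm_nonneg _) (hdpos k).le) (Finset.mem_range.2 (by omega))
  refine ⟨∑ k ∈ Finset.range (N + 1), ‖u k‖ / d k,
    Finset.sum_nonneg fun k _ => div_nonneg (norm_nonneg _) (hdpos k).le, fun n => ?_⟩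
  rcases le_total n N with h | h
  · exact hC n h
  · induction n, h using Nat.le_induction with
    | base => exact hC N le_rfl
    | succ n hn ih =>
      change ‖u (n + 1)‖ ≤ _ * d (n + 1)
      rw [hud, hdd, norm_mul, ← mul_assoc]
      have hcn : 0 < ‖c + n‖ := by
        refine norm_pos_iff.2 fun h => ?_
        have := congrArg Complex.re h
        simp at this
        have : (0 : ℝ) ≤ n := n.cast_nonneg
        linarith
      have hn1 : ‖(n : ℂ) + 1‖ = n + 1 := by
        exact_mod_cast Complex.norm_natCast (n + 1)
      refine mul_le_mul ih ?_ (norm_nonneg _) (mul_nonneg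
        (Finset.sum_nonneg fun k _ => div_nonneg (norm_nonneg _) (hdpos k).le) (hdpos n).le)
      rw [norm_div, norm_mul, norm_mul, hn1, div_le_div_iff₀ (by positivity) (by positivity)]
      have := hN n hn
      have h1 : (0 : ℝ) ≤ n + 1 := by positivity
      nlinarith [mul_le_mul_of_nonneg_right this h1]

theorem norm_hyp_ofReal_le {a b c : ℂ} {s : ℝ} (hc : 0 < c.re) (hs0 : 0 < s)
    (hs : (a + b).re < s + c.re) :
    ∃ C : ℝ, 0 ≤ C ∧ ∀ x : ℝ, 0 ≤ x → x < 1 → ‖hyp a b c x‖ ≤ C * (1 / (1 - x) ^ s) := by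
  obtain ⟨C, hC, h⟩ := exists_norm_coeff_le hc hs0 hs
  refine ⟨C, hC, fun x hx0 hx1 => ?_⟩
  refine tsum_of_norm_bounded
    ((hasSum_ascPochhammer_mul_pow s (by rwa [abs_of_nonneg hx0])).mul_left C) fun n => ?_
  rw [norm_mul, norm_pow, Complex.norm_of_nonneg hx0, ← mul_assoc]
  exact mul_le_mul_of_nonneg_right (h n) (by positivity)

theorem measurable_hyp (a b c : ℂ) : Measurable (hyp a b c) :=
  Measurable.tsum fun _ => by fun_prop

theorem measurable_bfun (m₁ m₂ : ℕ) (l : ℂ) : Measurable (bfun m₁ m₂ l) := by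
  unfold bfun Phi
  refine Measurable.const_mul (Measurable.mul ?_ ?_) _
  · exact Measurable.pow_const (by fun_prop) _
  · exact (measurable_hyp _ _ _).comp (by fun_prop)

theorem measurable_Del (m₁ m₂ : ℕ) : Measurable (Del m₁ m₂) := by
  unfold Del
  fun_prop

theorem tanh_pos {t : ℝ} (ht : 0 < t) : 0 < Real.tanh t := by
  rw [Real.tanh_eq_sinh_div_cosh]
  exact div_pos (Real.sinh_pos_iff.2 ht) (Real.cosh_pos t)

theorem exists_norm_bfun_le (m₁ m₂ : ℕ) (hm₁ : 1 ≤ m₁) (l : ℂ) (hl : 0 < l.im) :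
    ∃ C : ℝ, 0 ≤ C ∧ ∀ t : ℝ, 0 < t → ‖bfun m₁ m₂ l t‖ ≤
      C * (2 * Real.cosh t) ^ (-(l.im + rho m₁ m₂)) * (Real.tanh t ^ (m₁ + m₂))⁻¹ := by
  have hm : (1 : ℝ) ≤ m₁ := by exact_mod_cast hm₁
  obtain ⟨C, hC, h⟩ := norm_hyp_ofReal_le
    (a := ((rho m₁ m₂ : ℂ) - Complex.I * l) / 2) (b := ((m₁ : ℂ) + 2) / 4 - Complex.I * l / 2)
    (c := 1 - Complex.I * l) (s := (m₁ + m₂ : ℕ) / 2) (by simp; linarith) (by positivity)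
    (by simp [rho]; linarith)
  obtain ⟨K, hK⟩ : ∃ K : ℂ, ∀ t, bfun m₁ m₂ l t = K * Phi m₁ m₂ l t := ⟨_, fun _ => rfl⟩
  refine ⟨‖K‖ * C, by positivity, fun t ht => ?_⟩
  have hch := Real.cosh_pos t
  have hth := tanh_pos ht
  have hx := h (Real.cosh t ^ 2)⁻¹ (by positivity)
    (by have := one_sub_inv_cosh_sq t; nlinarith)
  rw [one_sub_inv_cosh_sq, ← Real.rpow_natCast (Real.tanh t) 2, ← Real.rpow_mul hth.le,
    Nat.cast_two, mul_div_cancel₀ _ two_ne_zero, Real.rpow_natCast, one_div] at hx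
  have he : (Complex.I * l - (rho m₁ m₂ : ℂ)).re = -(l.im + rho m₁ m₂) := by simp; ring
  rw [hK, norm_mul, Phi, norm_mul, Complex.norm_cpow_eq_rpow_re_of_pos (by positivity), he,
    ← Complex.ofReal_inv, mul_assoc ‖K‖, mul_assoc ‖K‖, mul_right_comm C, mul_comm (C * _)]
  gcongr

theorem Del_eq (m₁ m₂ : ℕ) (t : ℝ) :
    Del m₁ m₂ t = (2 * Real.cosh t) ^ (2 * rho m₁ m₂) * Real.tanh t ^ (m₁ + m₂) := by
  have hch := Real.cosh_pos t
  have h2 : 2 * rho m₁ m₂ = (m₁ + m₂ + m₂ : ℕ) := by simp [rho]; ring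
  rw [h2, Real.rpow_natCast, Del, pow_add _ (m₁ + m₂) m₂, mul_right_comm, ← mul_pow,
    Real.tanh_eq_sinh_div_cosh]
  congr 2
  field_simp

theorem exists_norm_bfun_rpow_mul_Del_le (m₁ m₂ : ℕ) (hm₁ : 1 ≤ m₁) (l : ℂ) (hl : 0 < l.im)
    {q : ℝ} (hq : 1 ≤ q) :
    ∃ C : ℝ, 0 ≤ C ∧ ∀ t : ℝ, 0 < t → ‖bfun m₁ m₂ l t‖ ^ q * Del m₁ m₂ t ≤
      C * (2 * Real.cosh t) ^ (2 * rho m₁ m₂ - q * (l.im + rho m₁ m₂)) *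
        (Real.tanh t ^ (m₁ + m₂)) ^ (1 - q) := by
  obtain ⟨C, hC, h⟩ := exists_norm_bfun_le m₁ m₂ hm₁ l hl
  refine ⟨C ^ q, by positivity, fun t ht => ?_⟩
  have hch := Real.cosh_pos t
  have hth := tanh_pos ht
  have h1 : ‖bfun m₁ m₂ l t‖ ^ q ≤ _ :=
    Real.rpow_le_rpow (norm_nonneg _) (h t ht) (by linarith)
  rw [Real.mul_rpow (by positivity) (by positivity), Real.mul_rpow (by positivity) (by positivity),
    ← Real.rpow_mul (by positivity), Real.inv_rpow (by positivity)] at h1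
  rw [Del_eq, Real.rpow_sub (by positivity), Real.rpow_sub (by positivity), Real.rpow_one]
  rw [neg_mul, Real.rpow_neg (by positivity), mul_comm _ q] at h1
  refine (mul_le_mul_of_nonneg_right h1 (by positivity)).trans_eq ?_
  field_simp

theorem continuous_two_mul_cosh_rpow (e : ℝ) :
    Continuous fun t : ℝ => (2 * Real.cosh t) ^ e :=
  (continuous_const.mul Real.continuous_cosh).rpow_const fun t =>
    Or.inl (mul_pos two_pos (Real.cosh_pos t)).ne'

theorem integrableOn_two_mul_cosh_rpow {e : ℝ} (he : e < 0) (a : ℝ) :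
    IntegrableOn (fun t : ℝ => (2 * Real.cosh t) ^ e) (Ioi a) := by
  refine (integrableOn_exp_mul_Ioi he a).mono'
    (continuous_two_mul_cosh_rpow e).aestronglyMeasurable (ae_of_all _ fun t => ?_)
  have hch := Real.cosh_pos t
  rw [Real.norm_of_nonneg (by positivity), mul_comm e, Real.exp_mul]
  refine Real.rpow_le_rpow_of_nonpos (Real.exp_pos t) ?_ he.le
  rw [Real.cosh_eq]
  linarith [Real.exp_pos (-t)]

theorem tanh_le_tanh {a t : ℝ} (ht : a ≤ t) : Real.tanh a ≤ Real.tanh t := by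
  rw [Real.tanh_eq_sinh_div_cosh, Real.tanh_eq_sinh_div_cosh,
    div_le_div_iff₀ (Real.cosh_pos a) (Real.cosh_pos t)]
  have := Real.sinh_nonneg_iff.2 (sub_nonneg.2 ht)
  rw [Real.sinh_sub] at this
  linarith

theorem aestronglyMeasurable_norm_bfun_rpow_mul_Del (m₁ m₂ : ℕ) (l : ℂ) (q : ℝ) (S : Set ℝ) :
    AEStronglyMeasurable (fun t : ℝ => ‖bfun m₁ m₂ l t‖ ^ q * Del m₁ m₂ t)
      (volume.restrict S) :=
  (((measurable_bfun m₁ m₂ l).norm.pow_const q).mul (measurable_Del m₁ m₂)).aestronglyMeasurable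

theorem Del_nonneg (m₁ m₂ : ℕ) {t : ℝ} (ht : 0 < t) : 0 ≤ Del m₁ m₂ t := by
  have := Real.sinh_pos_iff.2 ht
  have := Real.cosh_pos t
  unfold Del
  positivity

theorem integrableOn_norm_bfun_rpow_mul_Del_Ioi (m₁ m₂ : ℕ) (hm₁ : 1 ≤ m₁) (l : ℂ)
    (hl : 0 < l.im) {q : ℝ} (hq : 1 ≤ q) (hq2 : 2 * rho m₁ m₂ < q * (l.im + rho m₁ m₂))
    {a : ℝ} (ha : 0 < a) :
    IntegrableOn (fun t : ℝ => ‖bfun m₁ m₂ l t‖ ^ q * Del m₁ m₂ t) (Ioi a) := by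
  obtain ⟨C, hC, h⟩ := exists_norm_bfun_rpow_mul_Del_le m₁ m₂ hm₁ l hl hq
  refine (((integrableOn_two_mul_cosh_rpow (sub_neg.2 hq2) a).const_mul C).mul_const
    ((Real.tanh a ^ (m₁ + m₂)) ^ (1 - q))).mono'
    (aestronglyMeasurable_norm_bfun_rpow_mul_Del _ _ _ _ _) ?_
  filter_upwards [ae_restrict_mem measurableSet_Ioi] with t (hat : a < t)
  have hch := Real.cosh_pos t
  have hta := tanh_pos ha
  rw [Real.norm_of_nonneg (mul_nonneg (by positivity) (Del_nonneg _ _ (ha.trans hat)))]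
  refine (h t (ha.trans hat)).trans (mul_le_mul_of_nonneg_left ?_ (by positivity))
  refine Real.rpow_le_rpow_of_nonpos (by positivity) ?_ (by linarith)
  have := tanh_le_tanh hat.le
  gcongr

theorem exists_norm_bfun_mul_Del_le (m₁ m₂ : ℕ) (hm₁ : 1 ≤ m₁) (l : ℂ) (hl : 0 < l.im) :
    ∃ C : ℝ, ∀ t : ℝ, 0 < t → ‖‖bfun m₁ m₂ l t‖ * Del m₁ m₂ t‖ ≤
      C * (2 * Real.cosh t) ^ (rho m₁ m₂ - l.im) := by
  obtain ⟨C, -, h⟩ := exists_norm_bfun_rpow_mul_Del_le m₁ m₂ hm₁ l hl le_rfl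
  refine ⟨C, fun t ht => ?_⟩
  rw [Real.norm_of_nonneg (mul_nonneg (norm_nonneg _) (Del_nonneg _ _ ht))]
  have := h t ht
  rw [sub_self, Real.rpow_zero, mul_one, Real.rpow_one] at this
  convert this using 3
  ring

theorem stmt3 (m₁ m₂ : ℕ) (hm₁ : 1 ≤ m₁) (l : ℂ) (hl : 0 < l.im) :
    IntegrableOn (fun t : ℝ => ‖bfun m₁ m₂ l t‖ * Del m₁ m₂ t) (Set.Ioc 0 (1 / 2)) ∧
    (rho m₁ m₂ < l.im →
      IntegrableOn (fun t : ℝ => ‖bfun m₁ m₂ l t‖ * Del m₁ m₂ t) (Set.Ioi 0)) ∧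
    IntegrableOn (fun t : ℝ => ‖bfun m₁ m₂ l t‖ ^ 2 * Del m₁ m₂ t) (Set.Ioi (1 / 2)) ∧
    ∃ p : ℝ, 1 ≤ p ∧ p < 2 ∧
      IntegrableOn (fun t : ℝ => ‖bfun m₁ m₂ l t‖ ^ p * Del m₁ m₂ t) (Set.Ioi (1 / 2)) := by
  obtain ⟨C, hC⟩ := exists_norm_bfun_mul_Del_le m₁ m₂ hm₁ l hl
  have hmeas : ∀ S : Set ℝ, AEStronglyMeasurable (fun t : ℝ => ‖bfun m₁ m₂ l t‖ * Del m₁ m₂ t)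
      (volume.restrict S) := fun S => by
    simpa using aestronglyMeasurable_norm_bfun_rpow_mul_Del m₁ m₂ l 1 S
  have hrho : 0 ≤ rho m₁ m₂ := by unfold rho; positivity
  have hsum : 0 < l.im + rho m₁ m₂ := by linarith
  refine ⟨?_, fun hlt => ?_, ?_, ?_⟩
  · have hcont := (continuous_two_mul_cosh_rpow (rho m₁ m₂ - l.im)).const_mul C
    refine ((hcont.integrableOn_Icc (a := 0) (b := 1 / 2)).mono_set Ioc_subset_Icc_self).mono'
      (hmeas _) ?_
    filter_upwards [ae_restrict_mem measurableSet_Ioc] with t ht using hC t ht.1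
  · refine ((integrableOn_two_mul_cosh_rpow (sub_neg.2 hlt) 0).const_mul C).mono' (hmeas _) ?_
    filter_upwards [ae_restrict_mem measurableSet_Ioi] with t ht using hC t ht
  · simpa using integrableOn_norm_bfun_rpow_mul_Del_Ioi m₁ m₂ hm₁ l hl (q := 2) one_le_two
      (by linarith) one_half_pos
  · obtain ⟨p, hp, hp2⟩ := exists_between
      (max_lt one_lt_two ((div_lt_iff₀ hsum).2 (by linarith)) :
        max 1 (2 * rho m₁ m₂ / (l.im + rho m₁ m₂)) < 2)
    obtain ⟨hp1, hp3⟩ := max_lt_iff.1 hp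
    exact ⟨p, hp1.le, hp2, integrableOn_norm_bfun_rpow_mul_Del_Ioi m₁ m₂ hm₁ l hl hp1.le
      ((div_lt_iff₀ hsum).1 hp3) one_half_pos⟩

end
end

section
/- Let λ ∈ ℂ with Im λ > ρ. Then the integral ∫₀^∞ Φ_λ(t) Δ(t) dt converges absolutely and equals 2iλ c(−λ)/(ρ² + λ²), i.e. it equals −(2^{iλ+ρ+1}/(ρ²+λ²)) · Γ(1−iλ)Γ((m₁+m₂+1)/2)/(Γ((m₁+2)/4 − iλ/2) Γ((ρ−iλ)/2)), where c is the Harish-Chandra c-function c(λ) = 2^{ρ−iλ} Γ((m₁+m₂+1)/2)Γ(iλ)/(Γ((ρ+iλ)/2)Γ((m₁+2)/4 + iλ/2)). -/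
open Complex MeasureTheory Set

noncomputable section

/-- The Harish-Chandra c-function. -/
def cfun (m₁ m₂ : ℕ) (l : ℂ) : ℂ :=
  (2 : ℂ) ^ ((rho m₁ m₂ : ℂ) - Complex.I * l) *
    Complex.Gamma (((m₁ : ℂ) + (m₂ : ℂ) + 1) / 2) * Complex.Gamma (Complex.I * l) /
    (Complex.Gamma (((rho m₁ m₂ : ℂ) + Complex.I * l) / 2) *
      Complex.Gamma (((m₁ : ℂ) + 2) / 4 + Complex.I * l / 2))

open Filter Topology

theorem ascPochhammer_eval_eq_prod {R : Type*} [CommSemiring R] (n : ℕ) (z : R) :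
    (ascPochhammer R n).eval z = ∏ j ∈ Finset.range n, (z + j) := by
  induction n with
  | zero => simp
  | succ n ih => rw [ascPochhammer_succ_eval, Finset.prod_range_succ, ih]

theorem ascPochhammer_eval_ne_zero_of_re_pos {z : ℂ} (hz : 0 < z.re) (n : ℕ) :
    (ascPochhammer ℂ n).eval z ≠ 0 := by
  rw [ascPochhammer_eval_eq_prod, Finset.prod_ne_zero_iff]
  intro j _ h
  have h' := congrArg Complex.re h
  simp at h'
  have : (0 : ℝ) ≤ j := j.cast_nonneg
  linarith

theorem Gamma_add_natCast_of_re_pos {z : ℂ} (hz : 0 < z.re) (n : ℕ) :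
    Complex.Gamma (z + n) = (ascPochhammer ℂ n).eval z * Complex.Gamma z := by
  rw [← Complex.Gamma_add_nat_div_Gamma_eq, div_mul_cancel₀ _ (Complex.Gamma_ne_zero_of_re_pos hz)]
  intro k h
  have : (0 : ℝ) ≤ k := k.cast_nonneg
  rw [h] at hz
  simp at hz
  linarith

theorem ascPochhammer_succ_eval_mul_GammaSeq {z : ℂ} (hz : 0 < z.re) (n : ℕ) :
    (ascPochhammer ℂ (n + 1)).eval z * Complex.GammaSeq z n = (n : ℂ) ^ z * n.factorial := by
  have h := ascPochhammer_eval_ne_zero_of_re_pos hz (n + 1)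
  rw [ascPochhammer_eval_eq_prod] at h ⊢
  rw [Complex.GammaSeq, mul_div_cancel₀ _ h]

theorem GammaSeq_ne_zero_of_re_pos {z : ℂ} (hz : 0 < z.re) {n : ℕ} (hn : n ≠ 0) :
    Complex.GammaSeq z n ≠ 0 := by
  have h := ascPochhammer_succ_eval_mul_GammaSeq hz n
  intro h0
  rw [h0, mul_zero] at h
  have h1 : (n : ℂ) ^ z ≠ 0 := by simp [Complex.cpow_eq_zero_iff, hn]
  exact mul_ne_zero h1 (by exact_mod_cast n.factorial_ne_zero) h.symm

theorem tendsto_ascPochhammer_mul_div_mul {u v w z : ℂ} (hu : 0 < u.re) (hv : 0 < v.re)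
    (hw : 0 < w.re) (hz : 0 < z.re) (h : u + v = w + z) :
    Tendsto (fun n ↦ (ascPochhammer ℂ n).eval u * (ascPochhammer ℂ n).eval v /
        ((ascPochhammer ℂ n).eval w * (ascPochhammer ℂ n).eval z)) atTop
      (𝓝 (Complex.Gamma w * Complex.Gamma z / (Complex.Gamma u * Complex.Gamma v))) := by
  rw [← tendsto_add_atTop_iff_nat 1]
  have key : Tendsto (fun n ↦ Complex.GammaSeq w n * Complex.GammaSeq z n /
      (Complex.GammaSeq u n * Complex.GammaSeq v n)) atTop
      (𝓝 (Complex.Gamma w * Complex.Gamma z / (Complex.Gamma u * Complex.Gamma v))) :=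
    ((Complex.GammaSeq_tendsto_Gamma w).mul (Complex.GammaSeq_tendsto_Gamma z)).div
      ((Complex.GammaSeq_tendsto_Gamma u).mul (Complex.GammaSeq_tendsto_Gamma v))
      (mul_ne_zero (Complex.Gamma_ne_zero_of_re_pos hu) (Complex.Gamma_ne_zero_of_re_pos hv))
  refine key.congr' ?_
  filter_upwards [eventually_ne_atTop 0] with n hn
  have hn' : (n : ℂ) ≠ 0 := by exact_mod_cast hn
  rw [div_eq_div_iff
    (mul_ne_zero (GammaSeq_ne_zero_of_re_pos hu hn) (GammaSeq_ne_zero_of_re_pos hv hn))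
    (mul_ne_zero (ascPochhammer_eval_ne_zero_of_re_pos hw _)
      (ascPochhammer_eval_ne_zero_of_re_pos hz _))]
  have e : (n : ℂ) ^ u * (n : ℂ) ^ v = (n : ℂ) ^ w * (n : ℂ) ^ z := by
    rw [← Complex.cpow_add _ _ hn', ← Complex.cpow_add _ _ hn', h]
  calc _ = ((ascPochhammer ℂ (n + 1)).eval w * Complex.GammaSeq w n) *
        ((ascPochhammer ℂ (n + 1)).eval z * Complex.GammaSeq z n) := by ring
    _ = ((ascPochhammer ℂ (n + 1)).eval u * Complex.GammaSeq u n) *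
        ((ascPochhammer ℂ (n + 1)).eval v * Complex.GammaSeq v n) := by
      simp only [ascPochhammer_succ_eval_mul_GammaSeq, hu, hv, hw, hz]
      linear_combination -(n.factorial : ℂ) ^ 2 * e
    _ = _ := by ring

theorem sum_range_succ_hypergeometric_one {a e : ℂ} (ha : 0 < a.re) (he : 0 < e.re) (N : ℕ) :
    ∑ n ∈ Finset.range (N + 1), (ascPochhammer ℂ n).eval a * (ascPochhammer ℂ n).eval e /
        ((ascPochhammer ℂ n).eval (a + e + 1) * (ascPochhammer ℂ n).eval 1) =
      (ascPochhammer ℂ N).eval (a + 1) * (ascPochhammer ℂ N).eval (e + 1) /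
        ((ascPochhammer ℂ N).eval (a + e + 1) * (ascPochhammer ℂ N).eval 1) := by
  have left (z : ℂ) (n : ℕ) :
      (ascPochhammer ℂ (n + 1)).eval z = z * (ascPochhammer ℂ n).eval (z + 1) := by
    simp [ascPochhammer_succ_left, Polynomial.eval_comp]
  have hc : 0 < (a + e + 1).re := by simp; linarith
  induction N with
  | zero => simp
  | succ N ih =>
    have h1 := ascPochhammer_eval_ne_zero_of_re_pos hc (N + 1)
    have h2 := ascPochhammer_eval_ne_zero_of_re_pos (z := 1) (by simp) (N + 1)
    rw [Finset.sum_range_succ, ih, left a, left e]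
    rw [ascPochhammer_succ_eval] at h1 h2
    simp only [ascPochhammer_succ_eval]
    obtain ⟨h3, h4⟩ := mul_ne_zero_iff.mp h1
    obtain ⟨h5, h6⟩ := mul_ne_zero_iff.mp h2
    field_simp
    ring

theorem tendsto_sum_hypergeometric_one {a e : ℂ} (ha : 0 < a.re) (he : 0 < e.re) :
    Tendsto (fun N ↦ ∑ n ∈ Finset.range N, (ascPochhammer ℂ n).eval a * (ascPochhammer ℂ n).eval e /
        ((ascPochhammer ℂ n).eval (a + e + 1) * (ascPochhammer ℂ n).eval 1)) atTop
      (𝓝 (Complex.Gamma (a + e + 1) / (Complex.Gamma (a + 1) * Complex.Gamma (e + 1)))) := by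
  rw [← tendsto_add_atTop_iff_nat 1]
  simp only [sum_range_succ_hypergeometric_one ha he]
  have := tendsto_ascPochhammer_mul_div_mul (u := a + 1) (v := e + 1) (w := a + e + 1) (z := 1)
    (by simp; linarith) (by simp; linarith) (by simp; linarith) (by simp) (by ring)
  simpa using this

theorem norm_ascPochhammer_eval_re_le {z : ℂ} (hz : 0 < z.re) (n : ℕ) :
    ‖(ascPochhammer ℂ n).eval (z.re : ℂ)‖ ≤ ‖(ascPochhammer ℂ n).eval z‖ := by
  simp only [ascPochhammer_eval_eq_prod, norm_prod]
  refine Finset.prod_le_prod (fun _ _ ↦ norm_nonneg _) fun j _ ↦ ?_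
  have h : ‖(z.re : ℂ) + j‖ = z.re + j := by
    rw [show (z.re : ℂ) + j = ((z.re + j : ℝ) : ℂ) by push_cast; rfl, Complex.norm_real,
      Real.norm_of_nonneg (by positivity)]
  rw [h]
  simpa using Complex.re_le_norm (z + j)

theorem exists_norm_ascPochhammer_eval_le {z : ℂ} (hz : 0 < z.re) :
    ∃ C : ℝ, 0 ≤ C ∧ ∀ n,
      ‖(ascPochhammer ℂ n).eval z‖ ≤ C * ‖(ascPochhammer ℂ n).eval (z.re : ℂ)‖ := by
  have hz' : 0 < (z.re : ℂ).re := by simpa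
  have key : Tendsto (fun n ↦ ‖(ascPochhammer ℂ n).eval z‖ / ‖(ascPochhammer ℂ n).eval (z.re : ℂ)‖)
      atTop (𝓝 (‖Complex.Gamma z.re‖ / ‖Complex.Gamma z‖)) := by
    rw [← tendsto_add_atTop_iff_nat 1]
    refine (((Complex.GammaSeq_tendsto_Gamma z.re).norm.div
      (Complex.GammaSeq_tendsto_Gamma z).norm
      (norm_ne_zero_iff.mpr (Complex.Gamma_ne_zero_of_re_pos hz)))).congr' ?_
    filter_upwards [eventually_ne_atTop 0] with n hn
    have h1 := norm_ne_zero_iff.mpr (GammaSeq_ne_zero_of_re_pos hz hn)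
    have h2 := norm_ne_zero_iff.mpr (ascPochhammer_eval_ne_zero_of_re_pos hz' (n + 1))
    simp only [Pi.div_apply]
    rw [div_eq_div_iff h1 h2, mul_comm, ← norm_mul, ← norm_mul,
      ascPochhammer_succ_eval_mul_GammaSeq hz, ascPochhammer_succ_eval_mul_GammaSeq hz', norm_mul,
      norm_mul, Complex.norm_natCast_cpow_of_pos (Nat.pos_of_ne_zero hn),
      Complex.norm_natCast_cpow_of_pos (Nat.pos_of_ne_zero hn), Complex.ofReal_re]
  obtain ⟨C, hC⟩ := key.bddAbove_range
  have hC' (n : ℕ) := hC (Set.mem_range_self n)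
  refine ⟨C, le_trans (by positivity) (hC' 0), fun n ↦ ?_⟩
  rw [← div_le_iff₀ (norm_pos_iff.mpr (ascPochhammer_eval_ne_zero_of_re_pos hz' n))]
  exact hC' n

theorem summable_norm_hypergeometric_one_ofReal {x y : ℝ} (hx : 0 < x) (hy : 0 < y) :
    Summable fun n ↦ ‖(ascPochhammer ℂ n).eval (x : ℂ) * (ascPochhammer ℂ n).eval (y : ℂ) /
        ((ascPochhammer ℂ n).eval ((x : ℂ) + y + 1) * (ascPochhammer ℂ n).eval 1)‖ := by
  have cast (r : ℝ) (hr : 0 < r) (n : ℕ) :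
      (ascPochhammer ℂ n).eval (r : ℂ) = (‖(ascPochhammer ℂ n).eval (r : ℂ)‖ : ℝ) := by
    have : (ascPochhammer ℂ n).eval (r : ℂ) = ((ascPochhammer ℝ n).eval r : ℝ) := by
      simp [ascPochhammer_eval_eq_prod]
    rw [this, Complex.norm_real, Real.norm_of_nonneg (ascPochhammer_pos n r hr).le]
  have h := (tendsto_sum_hypergeometric_one (a := x) (e := y) (by simpa) (by simpa)).norm
  refine ((hasSum_iff_tendsto_nat_of_nonneg (fun _ ↦ norm_nonneg _) _).mpr
    (h.congr fun N ↦ ?_)).summable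
  have h1 (n : ℕ) : (ascPochhammer ℂ n).eval (x : ℂ) * (ascPochhammer ℂ n).eval (y : ℂ) /
        ((ascPochhammer ℂ n).eval ((x : ℂ) + y + 1) * (ascPochhammer ℂ n).eval 1) =
      ((‖(ascPochhammer ℂ n).eval (x : ℂ) * (ascPochhammer ℂ n).eval (y : ℂ) /
        ((ascPochhammer ℂ n).eval ((x : ℂ) + y + 1) * (ascPochhammer ℂ n).eval 1)‖ : ℝ) : ℂ) := by
    have e1 : (x : ℂ) + y + 1 = ((x + y + 1 : ℝ) : ℂ) := by push_cast; rfl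
    have e2 : (1 : ℂ) = ((1 : ℝ) : ℂ) := by simp
    rw [norm_div, norm_mul, norm_mul, e1, e2]
    push_cast only [Complex.ofReal_div, Complex.ofReal_mul]
    rw [← cast x hx, ← cast y hy, ← cast _ (by positivity), ← cast 1 one_pos]
  rw [Finset.sum_congr rfl fun n _ ↦ h1 n, ← Complex.ofReal_sum, Complex.norm_real,
    Real.norm_of_nonneg (Finset.sum_nonneg fun _ _ ↦ norm_nonneg _)]

theorem image_inv_cosh_sq_Ioi :
    (fun t : ℝ ↦ (Real.cosh t ^ 2)⁻¹) '' Ioi 0 = Ioo 0 1 := by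
  ext x
  constructor
  · rintro ⟨t, ht, rfl⟩
    have h : 1 < Real.cosh t := Real.one_lt_cosh.mpr (ne_of_gt ht)
    exact ⟨by positivity, inv_lt_one_of_one_lt₀ (by nlinarith)⟩
  · rintro ⟨h0, h1⟩
    have hs : 1 < (√x)⁻¹ := by
      rw [one_lt_inv₀ (Real.sqrt_pos.mpr h0), Real.sqrt_lt' one_pos]
      simpa
    refine ⟨Real.arcosh (√x)⁻¹, Real.arcosh_pos hs, ?_⟩
    simp only
    rw [Real.cosh_arcosh hs.le, inv_pow, Real.sq_sqrt h0.le, inv_inv]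

theorem injOn_inv_cosh_sq : InjOn (fun t : ℝ ↦ (Real.cosh t ^ 2)⁻¹) (Ioi 0) := by
  intro x hx y hy h
  simp only [inv_inj] at h
  have h1 := (pow_left_inj₀ (Real.cosh_pos x).le (Real.cosh_pos y).le two_ne_zero).mp h
  have h2 := le_antisymm (Real.cosh_le_cosh.mp h1.le) (Real.cosh_le_cosh.mp h1.ge)
  rwa [abs_of_pos hx, abs_of_pos hy] at h2

theorem hasDerivAt_inv_cosh_sq (t : ℝ) :
    HasDerivAt (fun t : ℝ ↦ (Real.cosh t ^ 2)⁻¹) (-(2 * Real.sinh t / Real.cosh t ^ 3)) t := by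
  have h : Real.cosh t ≠ 0 := (Real.cosh_pos t).ne'
  convert! ((Real.hasDerivAt_cosh t).pow 2).inv (pow_ne_zero 2 h) using 1
  simp
  field_simp

theorem abs_deriv_smul_beta_integrand (p : ℕ) (w : ℂ) {t : ℝ} (ht : 0 < t) :
    |(-(2 * Real.sinh t / Real.cosh t ^ 3))| •
      ((((Real.cosh t ^ 2)⁻¹ : ℝ) : ℂ) ^ (w / 2 - 1) *
        (1 - (((Real.cosh t ^ 2)⁻¹ : ℝ) : ℂ)) ^ (((p : ℂ) + 1) / 2 - 1)) =
      2 * ((Real.sinh t : ℂ) ^ p * (Real.cosh t : ℂ) ^ (-(w + p))) := by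
  have hs : 0 < Real.sinh t := Real.sinh_pos_iff.mpr ht
  have hc : 0 < Real.cosh t := Real.cosh_pos t
  have hs' : (Real.sinh t : ℂ) ≠ 0 := by exact_mod_cast hs.ne'
  have hc' : (Real.cosh t : ℂ) ≠ 0 := by exact_mod_cast hc.ne'
  have e1 : 1 - (((Real.cosh t ^ 2)⁻¹ : ℝ) : ℂ) = (((Real.sinh t / Real.cosh t) ^ 2 : ℝ) : ℂ) := by
    rw [← Complex.ofReal_one, ← Complex.ofReal_sub]
    congr 1
    field_simp
    linarith [Real.cosh_sq t]
  have sq (r : ℝ) (hr : 0 < r) (u : ℂ) : ((r ^ 2 : ℝ) : ℂ) ^ u = (r : ℂ) ^ (2 * u) := by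
    rw [Complex.ofReal_pow, two_mul, Complex.cpow_add _ _ (by exact_mod_cast hr.ne'), _root_.sq,
      Complex.mul_cpow_ofReal_nonneg hr.le hr.le]
  have inv (r : ℝ) (hr : 0 < r) (u : ℂ) : ((r⁻¹ : ℝ) : ℂ) ^ u = (r : ℂ) ^ (-u) := by
    rw [Complex.ofReal_inv, Complex.inv_cpow, Complex.cpow_neg]
    rw [Complex.arg_ofReal_of_nonneg hr.le]
    exact Real.pi_pos.ne
  rw [e1, abs_neg, abs_of_pos (by positivity), inv _ (by positivity), sq _ hc, sq _ (by positivity),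
    div_eq_mul_inv (Real.sinh t), Complex.ofReal_mul,
    Complex.mul_cpow_ofReal_nonneg hs.le (by positivity), inv _ hc, Complex.real_smul]
  have e2 : (Real.sinh t : ℂ) ^ (2 * (((p : ℂ) + 1) / 2 - 1)) * Real.sinh t =
      (Real.sinh t : ℂ) ^ p := by
    nth_rewrite 2 [← Complex.cpow_one (Real.sinh t : ℂ)]
    rw [← Complex.cpow_add _ _ hs', ← Complex.cpow_natCast]
    congr 1
    ring
  have e3 : (Real.cosh t : ℂ) ^ (2 * -(w / 2 - 1)) *
      (Real.cosh t : ℂ) ^ (-(2 * (((p : ℂ) + 1) / 2 - 1))) =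
      (Real.cosh t : ℂ) ^ (-(w + p)) * (Real.cosh t : ℂ) ^ 3 := by
    rw [← Complex.cpow_natCast _ 3, ← Complex.cpow_add _ _ hc', ← Complex.cpow_add _ _ hc']
    congr 1
    push_cast
    ring
  push_cast at *
  rw [← e2]
  generalize (Complex.sinh t : ℂ) ^ (2 * (((p : ℂ) + 1) / 2 - 1)) = A at *
  generalize (Complex.cosh t : ℂ) ^ (2 * -(w / 2 - 1)) = B at *
  generalize (Complex.cosh t : ℂ) ^ (-(2 * (((p : ℂ) + 1) / 2 - 1))) = C at *
  generalize (Complex.cosh t : ℂ) ^ (-(w + p)) = D at *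
  field_simp
  linear_combination A * e3

theorem integrableOn_sinh_pow_mul_cosh_cpow (p : ℕ) {w : ℂ} (hw : 0 < w.re) :
    IntegrableOn (fun t : ℝ ↦ (Real.sinh t : ℂ) ^ p * (Real.cosh t : ℂ) ^ (-(w + p))) (Ioi 0) := by
  have hw' : 0 < (w / 2).re := by simpa
  have hp' : 0 < (((p : ℂ) + 1) / 2).re := by simp; positivity
  have h := Complex.betaIntegral_convergent hw' hp'
  rw [intervalIntegrable_iff_integrableOn_Ioo_of_le zero_le_one, ← image_inv_cosh_sq_Ioi,
    integrableOn_image_iff_integrableOn_abs_deriv_smul measurableSet_Ioi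
      (fun t _ ↦ (hasDerivAt_inv_cosh_sq t).hasDerivWithinAt) injOn_inv_cosh_sq,
    integrableOn_congr_fun
      (fun t (ht : t ∈ Ioi (0 : ℝ)) ↦ abs_deriv_smul_beta_integrand p w ht) measurableSet_Ioi] at h
  have h2 := h.const_mul (2⁻¹ : ℂ)
  simpa [← mul_assoc, IntegrableOn] using h2

theorem integral_sinh_pow_mul_cosh_cpow (p : ℕ) {w : ℂ} (hw : 0 < w.re) :
    ∫ t in Ioi (0 : ℝ), (Real.sinh t : ℂ) ^ p * (Real.cosh t : ℂ) ^ (-(w + p)) =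
      Complex.Gamma (w / 2) * Complex.Gamma (((p : ℂ) + 1) / 2) /
        (2 * Complex.Gamma (w / 2 + ((p : ℂ) + 1) / 2)) := by
  have hw' : 0 < (w / 2).re := by simpa
  have hp' : 0 < (((p : ℂ) + 1) / 2).re := by simp; positivity
  have h := Complex.betaIntegral_eq_Gamma_mul_div _ _ hw' hp'
  rw [Complex.betaIntegral, intervalIntegral.integral_of_le zero_le_one,
    integral_Ioc_eq_integral_Ioo, ← image_inv_cosh_sq_Ioi,
    integral_image_eq_integral_abs_deriv_smul measurableSet_Ioi
      (fun t _ ↦ (hasDerivAt_inv_cosh_sq t).hasDerivWithinAt) injOn_inv_cosh_sq,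
    setIntegral_congr_fun measurableSet_Ioi (fun t ht ↦ abs_deriv_smul_beta_integrand p w ht),
    integral_const_mul] at h
  rw [mul_comm 2 (Complex.Gamma _), ← div_div, ← h]
  ring

theorem integral_norm_sinh_pow_mul_cosh_cpow (p : ℕ) {w : ℂ} (hw : 0 < w.re) :
    ∫ t in Ioi (0 : ℝ), ‖(Real.sinh t : ℂ) ^ p * (Real.cosh t : ℂ) ^ (-(w + p))‖ =
      ‖Complex.Gamma (w.re / 2) * Complex.Gamma (((p : ℂ) + 1) / 2) /
        (2 * Complex.Gamma (w.re / 2 + ((p : ℂ) + 1) / 2))‖ := by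
  rw [← integral_sinh_pow_mul_cosh_cpow p (w := w.re) (by simpa)]
  have h : ∀ t ∈ Ioi (0 : ℝ), (Real.sinh t : ℂ) ^ p * (Real.cosh t : ℂ) ^ (-((w.re : ℂ) + p)) =
      ((‖(Real.sinh t : ℂ) ^ p * (Real.cosh t : ℂ) ^ (-(w + p))‖ : ℝ) : ℂ) := by
    intro t ht
    have hs : 0 < Real.sinh t := Real.sinh_pos_iff.mpr ht
    rw [norm_mul, norm_pow, Complex.norm_real, Real.norm_of_nonneg hs.le,
      Complex.norm_cpow_eq_rpow_re_of_pos (Real.cosh_pos t), Complex.ofReal_mul,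
      Complex.ofReal_cpow (Real.cosh_pos t).le]
    simp
  rw [setIntegral_congr_fun measurableSet_Ioi h, integral_complex_ofReal, Complex.norm_real,
    Real.norm_of_nonneg (integral_nonneg fun _ ↦ norm_nonneg _)]

theorem integrable_tsum_of_summable_integral_norm {α : Type*} [MeasurableSpace α] {μ : Measure α}
    {F : ℕ → α → ℂ} (hF : ∀ n, Integrable (F n) μ) (hs : Summable fun n ↦ ∫ x, ‖F n x‖ ∂μ) :
    Integrable (fun x ↦ ∑' n, F n x) μ := by
  have hlt : ∫⁻ x, ∑' n, ‖F n x‖ₑ ∂μ < ⊤ := by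
    rw [lintegral_tsum fun n ↦ (hF n).1.enorm]
    simp only [← ofReal_integral_norm_eq_lintegral_enorm (hF _)]
    exact hs.tsum_ofReal_lt_top
  have hae : ∀ᵐ x ∂μ, Summable fun n ↦ F n x := by
    filter_upwards [ae_lt_top' (AEMeasurable.tsum fun n ↦ (hF n).1.enorm) hlt.ne] with x hx
    refine Summable.of_norm ?_
    have := ENNReal.summable_toReal hx.ne
    simpa using this
  refine ⟨aestronglyMeasurable_of_tendsto_ae (u := atTop)
    (f := fun N x ↦ ∑ n ∈ Finset.range N, F n x)
    (fun N ↦ ?_) (hae.mono fun x hx ↦ hx.hasSum.tendsto_sum_nat), ?_⟩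
  · exact Finset.aestronglyMeasurable_fun_sum _ fun n _ ↦ (hF n).1
  · exact (lintegral_mono fun x ↦ enorm_tsum_le_tsum_enorm).trans_lt hlt

theorem summable_norm_hypergeometric_mul_Gamma {a e : ℂ} (p : ℕ) (ha : 0 < a.re) (he : 0 < e.re) :
    Summable fun n : ℕ ↦ ‖(ascPochhammer ℂ n).eval a *
        (ascPochhammer ℂ n).eval (e + ((p : ℂ) + 1) / 2) /
        ((ascPochhammer ℂ n).eval (a + e + 1) * (n.factorial : ℂ))‖ *
      ‖Complex.Gamma ((e.re : ℂ) + n) * Complex.Gamma (((p : ℂ) + 1) / 2) /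
        (2 * Complex.Gamma ((e.re : ℂ) + n + ((p : ℂ) + 1) / 2))‖ := by
  have hp : (((p : ℂ) + 1) / 2).re = ((p : ℝ) + 1) / 2 := by simp
  have hp0 : (0 : ℝ) < ((p : ℝ) + 1) / 2 := by positivity
  have hb : 0 < (e + ((p : ℂ) + 1) / 2).re := by rw [Complex.add_re, hp]; linarith
  have hbr : (((e + ((p : ℂ) + 1) / 2).re : ℝ) : ℂ) = (e.re : ℂ) + ((p : ℂ) + 1) / 2 := by
    rw [Complex.add_re, hp]; push_cast; rfl
  have hc : 0 < (a + e + 1).re := by simp; linarith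
  have hcr : (((a + e + 1).re : ℝ) : ℂ) = (a.re : ℂ) + e.re + 1 := by simp
  have he' : 0 < (e.re : ℂ).re := by simpa
  have hb' : 0 < ((e.re : ℂ) + ((p : ℂ) + 1) / 2).re := by rw [← hbr]; simpa using hb
  have hc' : 0 < ((a.re : ℂ) + e.re + 1).re := by rw [← hcr]; simpa using hc
  obtain ⟨A, hA0, hA⟩ := exists_norm_ascPochhammer_eval_le ha
  obtain ⟨B, hB0, hB⟩ := exists_norm_ascPochhammer_eval_le hb
  have hC := norm_ascPochhammer_eval_re_le hc
  rw [hbr] at hB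
  rw [hcr] at hC
  refine Summable.of_nonneg_of_le (fun n ↦ by positivity) (fun n ↦ ?_)
    ((summable_norm_hypergeometric_one_ofReal ha he).mul_left
      (A * B * ‖Complex.Gamma e.re * Complex.Gamma (((p : ℂ) + 1) / 2) /
        (2 * Complex.Gamma ((e.re : ℂ) + ((p : ℂ) + 1) / 2))‖))
  have hf : (ascPochhammer ℂ n).eval 1 = (n.factorial : ℂ) := ascPochhammer_eval_one ℂ n
  rw [show (e.re : ℂ) + n + ((p : ℂ) + 1) / 2 = (e.re : ℂ) + ((p : ℂ) + 1) / 2 + n by ring,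
    Gamma_add_natCast_of_re_pos he', Gamma_add_natCast_of_re_pos hb', hf]
  simp only [norm_div, norm_mul]
  have hB' := norm_pos_iff.mpr (ascPochhammer_eval_ne_zero_of_re_pos hb' n)
  have hC' := norm_pos_iff.mpr (ascPochhammer_eval_ne_zero_of_re_pos hc' n)
  have hG := norm_pos_iff.mpr (Complex.Gamma_ne_zero_of_re_pos hb')
  have hn : 0 < ‖(n.factorial : ℂ)‖ := by simpa using n.factorial_pos
  set b' := (e.re : ℂ) + ((p : ℂ) + 1) / 2
  have hA := hA n
  have hB := hB n
  have hC := hC n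
  calc _ ≤ A * ‖(ascPochhammer ℂ n).eval (a.re : ℂ)‖ *
        (B * ‖(ascPochhammer ℂ n).eval b'‖) /
        (‖(ascPochhammer ℂ n).eval ((a.re : ℂ) + e.re + 1)‖ * ‖(n.factorial : ℂ)‖) * _ := by
        gcongr
    _ = _ := by
        field_simp

theorem integral_hypergeometric_mul_sinh_pow {a e : ℂ} (p : ℕ) (ha : 0 < a.re) (he : 0 < e.re) :
    IntegrableOn (fun t : ℝ ↦ (Real.sinh t : ℂ) ^ p * (Real.cosh t : ℂ) ^ (-(2 * e + p)) *
      hyp a (e + ((p : ℂ) + 1) / 2) (a + e + 1) (((Real.cosh t ^ 2 : ℝ) : ℂ))⁻¹) (Ioi 0) ∧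
    ∫ t in Ioi (0 : ℝ), (Real.sinh t : ℂ) ^ p * (Real.cosh t : ℂ) ^ (-(2 * e + p)) *
      hyp a (e + ((p : ℂ) + 1) / 2) (a + e + 1) (((Real.cosh t ^ 2 : ℝ) : ℂ))⁻¹ =
      Complex.Gamma (((p : ℂ) + 1) / 2) * Complex.Gamma (a + e + 1) /
        (2 * a * e * Complex.Gamma (e + ((p : ℂ) + 1) / 2) * Complex.Gamma a) := by
  set q : ℂ := ((p : ℂ) + 1) / 2 with hq
  have hp : q.re = ((p : ℝ) + 1) / 2 := by simp [hq]
  have hp0 : (0 : ℝ) < ((p : ℝ) + 1) / 2 := by positivity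
  have hb : 0 < (e + q).re := by rw [Complex.add_re, hp]; linarith
  set coef : ℕ → ℂ := fun n ↦ (ascPochhammer ℂ n).eval a * (ascPochhammer ℂ n).eval (e + q) /
    ((ascPochhammer ℂ n).eval (a + e + 1) * (n.factorial : ℂ)) with hcoef
  set F : ℕ → ℝ → ℂ := fun n t ↦ coef n *
    ((Real.sinh t : ℂ) ^ p * (Real.cosh t : ℂ) ^ (-(2 * (e + n) + p))) with hF
  have hw (n : ℕ) : 0 < (2 * (e + n)).re := by
    have : (0 : ℝ) ≤ n := n.cast_nonneg
    simp
    linarith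
  have htsum (t : ℝ) : ∑' n, F n t = (Real.sinh t : ℂ) ^ p *
      (Real.cosh t : ℂ) ^ (-(2 * e + p)) *
      hyp a (e + q) (a + e + 1) (((Real.cosh t ^ 2 : ℝ) : ℂ))⁻¹ := by
    rw [hyp, ← tsum_mul_left]
    refine tsum_congr fun n ↦ ?_
    have hc' : (Real.cosh t : ℂ) ≠ 0 := by exact_mod_cast (Real.cosh_pos t).ne'
    have h1 : (Real.cosh t : ℂ) ^ (-(2 * (e + n) + p)) =
        (Real.cosh t : ℂ) ^ (-(2 * e + p)) * ((((Real.cosh t ^ 2 : ℝ) : ℂ))⁻¹) ^ n := by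
      rw [Complex.ofReal_pow, inv_pow, ← pow_mul, ← Complex.cpow_natCast, ← Complex.cpow_neg,
        ← Complex.cpow_add _ _ hc']
      congr 1
      push_cast
      ring
    rw [hF]
    simp only [h1, hcoef]
    ring
  have hint (n : ℕ) : IntegrableOn (F n) (Ioi 0) :=
    (integrableOn_sinh_pow_mul_cosh_cpow p (hw n)).const_mul _
  have hnorm : Summable fun n ↦ ∫ t in Ioi (0 : ℝ), ‖F n t‖ := by
    refine (summable_norm_hypergeometric_mul_Gamma p ha he).congr fun n ↦ ?_
    simp only [hF, norm_mul (coef n)]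
    rw [integral_const_mul, integral_norm_sinh_pow_mul_cosh_cpow p (hw n)]
    have : ((2 * (e + n)).re : ℂ) / 2 = e.re + n := by simp
    rw [this]
  have hval (n : ℕ) : ∫ t in Ioi (0 : ℝ), F n t =
      Complex.Gamma e * Complex.Gamma q / (2 * Complex.Gamma (e + q)) *
        ((ascPochhammer ℂ n).eval a * (ascPochhammer ℂ n).eval e /
        ((ascPochhammer ℂ n).eval (a + e + 1) * (ascPochhammer ℂ n).eval 1)) := by
    simp only [hF]
    rw [integral_const_mul, integral_sinh_pow_mul_cosh_cpow p (hw n),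
      mul_div_cancel_left₀ _ two_ne_zero, ← hq,
      add_right_comm, Gamma_add_natCast_of_re_pos he, Gamma_add_natCast_of_re_pos hb,
      ascPochhammer_eval_one]
    have h1 := ascPochhammer_eval_ne_zero_of_re_pos hb n
    have h2 := Complex.Gamma_ne_zero_of_re_pos hb
    simp only [hcoef]
    field_simp
  simp only [← htsum]
  refine ⟨integrable_tsum_of_summable_integral_norm hint hnorm, ?_⟩
  have h1 := (hasSum_integral_of_summable_integral_norm hint hnorm).tendsto_sum_nat
  simp only [hval, ← Finset.mul_sum] at h1
  rw [tendsto_nhds_unique h1 ((tendsto_sum_hypergeometric_one ha he).const_mul _)]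
  have ha0 : a ≠ 0 := fun h ↦ by simp [h] at ha
  have he0 : e ≠ 0 := fun h ↦ by simp [h] at he
  rw [Complex.Gamma_add_one a ha0, Complex.Gamma_add_one e he0]
  have h2 := Complex.Gamma_ne_zero_of_re_pos hb
  have h3 := Complex.Gamma_ne_zero_of_re_pos ha
  have h4 := Complex.Gamma_ne_zero_of_re_pos he
  field_simp

theorem Phi_mul_Del_eq (m₁ m₂ : ℕ) (l : ℂ) {t : ℝ} (a e : ℂ)
    (ha : a = ((rho m₁ m₂ : ℂ) - Complex.I * l) / 2)
    (he : e = (-(rho m₁ m₂ : ℂ) - Complex.I * l) / 2) :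
    Phi m₁ m₂ l t * (Del m₁ m₂ t : ℂ) =
      (2 : ℂ) ^ (Complex.I * l + (rho m₁ m₂ : ℂ)) *
        ((Real.sinh t : ℂ) ^ (m₁ + m₂) * (Real.cosh t : ℂ) ^ (-(2 * e + ((m₁ + m₂ : ℕ) : ℂ))) *
          hyp a (e + (((m₁ + m₂ : ℕ) : ℂ) + 1) / 2) (a + e + 1)
            (((Real.cosh t ^ 2 : ℝ) : ℂ))⁻¹) := by
  have hρ : (rho m₁ m₂ : ℂ) = ((m₁ : ℂ) + 2 * m₂) / 2 := by simp [rho]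
  have hc' : (Real.cosh t : ℂ) ≠ 0 := by exact_mod_cast (Real.cosh_pos t).ne'
  have h1 : e + (((m₁ + m₂ : ℕ) : ℂ) + 1) / 2 = ((m₁ : ℂ) + 2) / 4 - Complex.I * l / 2 := by
    rw [he, hρ]; push_cast; ring
  have h2 : a + e + 1 = 1 - Complex.I * l := by rw [ha, he]; ring
  have h3 : (2 : ℂ) ^ (Complex.I * l + (rho m₁ m₂ : ℂ)) =
      (2 : ℂ) ^ (Complex.I * l - (rho m₁ m₂ : ℂ)) * 2 ^ (m₁ + m₂) * 2 ^ m₂ := by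
    rw [← Complex.cpow_natCast, ← Complex.cpow_natCast, ← Complex.cpow_add _ _ two_ne_zero,
      ← Complex.cpow_add _ _ two_ne_zero]
    congr 1
    rw [hρ]; push_cast; ring
  have h4 : (Real.cosh t : ℂ) ^ (-(2 * e + ((m₁ + m₂ : ℕ) : ℂ))) =
      (Real.cosh t : ℂ) ^ (Complex.I * l - (rho m₁ m₂ : ℂ)) * (Real.cosh t : ℂ) ^ m₂ := by
    rw [← Complex.cpow_natCast _ m₂, ← Complex.cpow_add _ _ hc']
    congr 1
    rw [he, hρ]; push_cast; ring
  have h5 : (((2 * Real.cosh t : ℝ)) : ℂ) ^ (Complex.I * l - (rho m₁ m₂ : ℂ)) =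
      (2 : ℂ) ^ (Complex.I * l - (rho m₁ m₂ : ℂ)) *
        (Real.cosh t : ℂ) ^ (Complex.I * l - (rho m₁ m₂ : ℂ)) := by
    rw [Complex.ofReal_mul, Complex.mul_cpow_ofReal_nonneg zero_le_two (Real.cosh_pos t).le]
    simp
  rw [h1, h2, h3, h4, Phi, h5, Del, ← ha]
  push_cast
  ring

theorem stmt4 (m₁ m₂ : ℕ) (hm₁ : 1 ≤ m₁) (l : ℂ) (hl : rho m₁ m₂ < l.im) :
    IntegrableOn (fun t : ℝ => Phi m₁ m₂ l t * (Del m₁ m₂ t : ℂ)) (Set.Ioi 0) ∧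
    (∫ t in Set.Ioi (0 : ℝ), Phi m₁ m₂ l t * (Del m₁ m₂ t : ℂ)) =
      2 * Complex.I * l * cfun m₁ m₂ (-l) / ((rho m₁ m₂ : ℂ) ^ 2 + l ^ 2) ∧
    (∫ t in Set.Ioi (0 : ℝ), Phi m₁ m₂ l t * (Del m₁ m₂ t : ℂ)) =
      -((2 : ℂ) ^ (Complex.I * l + (rho m₁ m₂ : ℂ) + 1) / ((rho m₁ m₂ : ℂ) ^ 2 + l ^ 2)) *
        (Complex.Gamma (1 - Complex.I * l) * Complex.Gamma (((m₁ : ℂ) + (m₂ : ℂ) + 1) / 2) /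
          (Complex.Gamma (((m₁ : ℂ) + 2) / 4 - Complex.I * l / 2) *
            Complex.Gamma (((rho m₁ m₂ : ℂ) - Complex.I * l) / 2))) := by
  set a : ℂ := ((rho m₁ m₂ : ℂ) - Complex.I * l) / 2 with ha
  set e : ℂ := (-(rho m₁ m₂ : ℂ) - Complex.I * l) / 2 with he
  have hρ : (rho m₁ m₂ : ℂ) = ((m₁ : ℂ) + 2 * m₂) / 2 := by simp [rho]
  have hρ0 : 0 ≤ rho m₁ m₂ := by unfold rho; positivity
  have ha' : 0 < a.re := by simp [ha]; linarith
  have he' : 0 < e.re := by simp [he]; linarith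
  have ha0 : a ≠ 0 := fun h ↦ by simp [h] at ha'
  have he0 : e ≠ 0 := fun h ↦ by simp [h] at he'
  obtain ⟨hint, hval⟩ := integral_hypergeometric_mul_sinh_pow (m₁ + m₂) ha' he'
  have hae : (rho m₁ m₂ : ℂ) ^ 2 + l ^ 2 = -(4 * a * e) := by
    rw [ha, he]
    linear_combination l ^ 2 * Complex.I_sq
  have h1 : e + (((m₁ + m₂ : ℕ) : ℂ) + 1) / 2 = ((m₁ : ℂ) + 2) / 4 - Complex.I * l / 2 := by
    rw [he, hρ]; push_cast; ring
  have h2 : a + e + 1 = 1 - Complex.I * l := by rw [ha, he]; ring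
  have hI : (∫ t in Set.Ioi (0 : ℝ), Phi m₁ m₂ l t * (Del m₁ m₂ t : ℂ)) =
      -((2 : ℂ) ^ (Complex.I * l + (rho m₁ m₂ : ℂ) + 1) / ((rho m₁ m₂ : ℂ) ^ 2 + l ^ 2)) *
        (Complex.Gamma (1 - Complex.I * l) * Complex.Gamma (((m₁ : ℂ) + (m₂ : ℂ) + 1) / 2) /
          (Complex.Gamma (((m₁ : ℂ) + 2) / 4 - Complex.I * l / 2) * Complex.Gamma a)) := by
    simp only [Phi_mul_Del_eq m₁ m₂ l a e ha he]
    rw [integral_const_mul, hval, hae, h1, h2, Complex.cpow_add (Complex.I * l + rho m₁ m₂) 1 two_ne_zero,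
      Complex.cpow_one]
    push_cast
    field_simp
    ring
  refine ⟨?_, ?_, hI⟩
  · simp only [Phi_mul_Del_eq m₁ m₂ l a e ha he]
    exact hint.const_mul _
  · have hl0 : -(Complex.I * l) ≠ 0 := by
      intro h
      have := congrArg Complex.re h
      simp at this
      linarith
    rw [hI, cfun, sub_eq_add_neg 1, add_comm 1 (-(Complex.I * l)), Complex.Gamma_add_one _ hl0,
      Complex.cpow_add _ _ two_ne_zero, Complex.cpow_one,
      show (rho m₁ m₂ : ℂ) - Complex.I * -l = Complex.I * l + (rho m₁ m₂ : ℂ) by ring,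
      show ((rho m₁ m₂ : ℂ) + Complex.I * -l) / 2 = a by rw [ha]; ring,
      show ((m₁ : ℂ) + 2) / 4 + Complex.I * -l / 2 = ((m₁ : ℂ) + 2) / 4 - Complex.I * l / 2 by ring,
      mul_neg]
    ring

end
end
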